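/- arXiv:2302.07461 — 9 statements merged into one kernel-verified Lean document; each statement's English description precedes it below -/
import Mathlib

section
/- If f : ℕ → ℂ is a multiplicative function satisfying f(a³ + b³ + c³ + d³) = f(a³) + f(b³) + f(c³) + f(d³) for all positive integers a, b, c, d, then f(2^r) = 2^r for every integer r ≥ 1. -/
/-!
Write `g n = f (n ^ 3)`. Whenever a number has two representations as a sum of four positive
cubes, the additivity hypothesis gives a linear relation between values of `g`.

* Since `{0, 4, 7, 11}` and `{1, 2, 9, 10}` have equal power sums of degrees `0` to `3` (a
  Prouhet–Tarry–Escott pair), `g` satisfies a linear recurrence of order `11`, so `g n = n ^ 3`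
  for all `n ≥ 1` as soon as this holds for `n ≤ 11` (`cube_values`).
* Coincidences among small sums of four cubes express `g 4, …, g 11` through `g 2` and `g 3`
  (with `g 1 = 1`). The multiplicative relations `f 100 = f 4 * f 25`, `g 6 = g 2 * g 3` and
  `g 10 = g 2 * g 5` then leave only `g 2 = 8`, `g 3 = 27` (`cube_values_small`).

So `f` fixes every cube and every sum of four positive cubes. This covers `8 ^ k` and
`4 * 8 ^ k`. For `2 * 8 ^ k`, both `37 = 1 + 1 + 8 + 27` and `74 = 1 + 1 + 8 + 64` are sums of
four cubes, so `f (2 * 8 ^ k) * 37 = f (74 * 8 ^ k) = 74 * 8 ^ k`.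
-/

/-- The base values of the recurrence: `f` fixes the cubes of `1, …, 11`. -/
lemma cube_values_small (f : ℕ → ℂ)
    (hf1 : f 1 = 1)
    (hmul : ∀ m n : ℕ, 0 < m → 0 < n → Nat.Coprime m n → f (m * n) = f m * f n)
    (hadd : ∀ a b c d : ℕ, 0 < a → 0 < b → 0 < c → 0 < d →
      f (a ^ 3 + b ^ 3 + c ^ 3 + d ^ 3) = f (a ^ 3) + f (b ^ 3) + f (c ^ 3) + f (d ^ 3)) :
    ∀ n : ℕ, 1 ≤ n → n ≤ 11 → f (n ^ 3) = (n : ℂ) ^ 3 := by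
  -- Two representations of the same number as a sum of four cubes give a linear relation.
  have rel : ∀ a b c d a' b' c' d' : ℕ, 0 < a → 0 < b → 0 < c → 0 < d →
      0 < a' → 0 < b' → 0 < c' → 0 < d' →
      a ^ 3 + b ^ 3 + c ^ 3 + d ^ 3 = a' ^ 3 + b' ^ 3 + c' ^ 3 + d' ^ 3 →
      f (a ^ 3) + f (b ^ 3) + f (c ^ 3) + f (d ^ 3)
        = f (a' ^ 3) + f (b' ^ 3) + f (c' ^ 3) + f (d' ^ 3) := by
    intro a b c d a' b' c' d' ha hb hc hd ha' hb' hc' hd' h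
    rw [← hadd a b c d ha hb hc hd, ← hadd a' b' c' d' ha' hb' hc' hd', h]
  have e1 := rel 1 1 1 6 3 4 4 4 (by norm_num) (by norm_num) (by norm_num) (by norm_num)
    (by norm_num) (by norm_num) (by norm_num) (by norm_num) (by norm_num)
  have e2 := rel 1 1 5 5 1 2 3 6 (by norm_num) (by norm_num) (by norm_num) (by norm_num)
    (by norm_num) (by norm_num) (by norm_num) (by norm_num) (by norm_num)
  have e3 := rel 1 1 2 8 3 3 5 7 (by norm_num) (by norm_num) (by norm_num) (by norm_num)
    (by norm_num) (by norm_num) (by norm_num) (by norm_num) (by norm_num)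
  have e4 := rel 1 4 5 8 2 2 7 7 (by norm_num) (by norm_num) (by norm_num) (by norm_num)
    (by norm_num) (by norm_num) (by norm_num) (by norm_num) (by norm_num)
  have e5 := rel 1 2 7 8 6 6 6 6 (by norm_num) (by norm_num) (by norm_num) (by norm_num)
    (by norm_num) (by norm_num) (by norm_num) (by norm_num) (by norm_num)
  have e6 := rel 1 1 3 9 2 4 7 7 (by norm_num) (by norm_num) (by norm_num) (by norm_num)
    (by norm_num) (by norm_num) (by norm_num) (by norm_num) (by norm_num)
  have e7 := rel 1 1 2 10 1 4 6 9 (by norm_num) (by norm_num) (by norm_num) (by norm_num)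
    (by norm_num) (by norm_num) (by norm_num) (by norm_num) (by norm_num)
  have e8 := rel 1 2 3 11 1 5 8 9 (by norm_num) (by norm_num) (by norm_num) (by norm_num)
    (by norm_num) (by norm_num) (by norm_num) (by norm_num) (by norm_num)
  have h4 := hadd 1 1 1 1 (by norm_num) (by norm_num) (by norm_num) (by norm_num)
  have h25 := hadd 1 2 2 2 (by norm_num) (by norm_num) (by norm_num) (by norm_num)
  have h100 := hadd 1 2 3 4 (by norm_num) (by norm_num) (by norm_num) (by norm_num)
  have m100 := hmul 4 25 (by norm_num) (by norm_num) (by norm_num)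
  have m6 := hmul 8 27 (by norm_num) (by norm_num) (by norm_num)
  have m10 := hmul 8 125 (by norm_num) (by norm_num) (by norm_num)
  norm_num [hf1] at e1 e2 e3 e4 e5 e6 e7 e8 h4 h25 h100 m100 m6 m10
  rw [h4, h25, h100] at m100
  have s4 : f 64 = (-2 - 7 * f 8 + 14 * f 27) / 5 := by grind
  have s6 : f 216 = (-21 - 21 * f 8 + 47 * f 27) / 5 := by grind
  have s5 : f 125 = (-13 - 8 * f 8 + 26 * f 27) / 5 := by grind
  have s7 : f 343 = (-33 - 38 * f 8 + 76 * f 27) / 5 := by grind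
  have s8 : f 512 = (-56 - 51 * f 8 + 112 * f 27) / 5 := by grind
  have s9 : f 729 = (-78 - 78 * f 8 + 161 * f 27) / 5 := by grind
  have s10 : f 1000 = (-106 - 111 * f 8 + 222 * f 27) / 5 := by grind
  have s11 : f 1331 = (-147 - 142 * f 8 + 294 * f 27) / 5 := by grind
  have hy : f 27 = (17 + 62 * f 8) / 19 := by
    rw [s4] at m100
    linear_combination (5 / 19) * m100
  have hx : (f 8 - 8) * (31 * f 8 + 5) = 0 := by
    rw [s6, hy] at m6
    linear_combination (-19 / 2) * m6
  have h8 : f 8 = 8 := by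
    rcases mul_eq_zero.mp hx with h | h
    · linear_combination h
    · -- The spurious root of the quadratic is excluded by `g 10 = g 2 * g 5`.
      exfalso
      have h8 : f 8 = -5 / 31 := by linear_combination h / 31
      rw [s10, s5, hy, h8] at m10
      norm_num at m10
  have h27 : f 27 = 27 := by rw [hy, h8]; norm_num
  intro n h1 h11
  interval_cases n <;> norm_num [hf1, s4, s5, s6, s7, s8, s9, s10, s11, h8, h27]

lemma cube_values (f : ℕ → ℂ)
    (hf1 : f 1 = 1)
    (hmul : ∀ m n : ℕ, 0 < m → 0 < n → Nat.Coprime m n → f (m * n) = f m * f n)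
    (hadd : ∀ a b c d : ℕ, 0 < a → 0 < b → 0 < c → 0 < d →
      f (a ^ 3 + b ^ 3 + c ^ 3 + d ^ 3) = f (a ^ 3) + f (b ^ 3) + f (c ^ 3) + f (d ^ 3)) :
    ∀ n : ℕ, 1 ≤ n → f (n ^ 3) = (n : ℂ) ^ 3 := by
  intro n
  induction n using Nat.strong_induction_on with
  | _ n ih =>
    intro hn
    rcases le_or_gt n 11 with h | h
    · exact cube_values_small f hf1 hmul hadd n hn h
    · obtain ⟨m, rfl⟩ : ∃ m, n = m + 11 := ⟨n - 11, by omega⟩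
      have hm : 0 < m := by omega
      have hL := hadd m (m + 4) (m + 7) (m + 11) hm (by omega) (by omega) (by omega)
      have hR := hadd (m + 1) (m + 2) (m + 9) (m + 10) (by omega) (by omega) (by omega) (by omega)
      have hS : m ^ 3 + (m + 4) ^ 3 + (m + 7) ^ 3 + (m + 11) ^ 3
          = (m + 1) ^ 3 + (m + 2) ^ 3 + (m + 9) ^ 3 + (m + 10) ^ 3 := by ring
      rw [hS, hR, ih m (by omega) hm, ih (m + 4) (by omega) (by omega),
        ih (m + 7) (by omega) (by omega), ih (m + 1) (by omega) (by omega),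
        ih (m + 2) (by omega) (by omega), ih (m + 9) (by omega) (by omega),
        ih (m + 10) (by omega) (by omega)] at hL
      push_cast at hL ⊢
      linear_combination -hL

theorem cubes_four_powers_of_two (f : ℕ → ℂ)
    (hf1 : f 1 = 1)
    (hmul : ∀ m n : ℕ, 0 < m → 0 < n → Nat.Coprime m n → f (m * n) = f m * f n)
    (hadd : ∀ a b c d : ℕ, 0 < a → 0 < b → 0 < c → 0 < d →
      f (a ^ 3 + b ^ 3 + c ^ 3 + d ^ 3) = f (a ^ 3) + f (b ^ 3) + f (c ^ 3) + f (d ^ 3)) :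
    ∀ r : ℕ, 1 ≤ r → f (2 ^ r) = 2 ^ r := by
  have hc := cube_values f hf1 hmul hadd
  have hsum : ∀ a b c d : ℕ, 0 < a → 0 < b → 0 < c → 0 < d →
      f (a ^ 3 + b ^ 3 + c ^ 3 + d ^ 3) = (a : ℂ) ^ 3 + b ^ 3 + c ^ 3 + d ^ 3 := by
    intro a b c d ha hb hc' hd
    rw [hadd a b c d ha hb hc' hd, hc a ha, hc b hb, hc c hc', hc d hd]
  intro r _
  obtain ⟨k, hk⟩ : ∃ k, r = 3 * k ∨ r = 3 * k + 1 ∨ r = 3 * k + 2 := ⟨r / 3, by omega⟩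
  have hp : 0 < 2 ^ k := by positivity
  rcases hk with rfl | rfl | rfl
  · have h := hc (2 ^ k) hp
    rw [← pow_mul, mul_comm k 3] at h
    rw [h]
    push_cast
    ring
  · have h37 := hsum 1 1 2 3 (by norm_num) (by norm_num) (by norm_num) (by norm_num)
    norm_num at h37
    have h := hsum (2 ^ k) (2 ^ k) (2 * 2 ^ k) (4 * 2 ^ k) hp hp (by omega) (by omega)
    have hE : (2 ^ k) ^ 3 + (2 ^ k) ^ 3 + (2 * 2 ^ k) ^ 3 + (4 * 2 ^ k) ^ 3
        = 2 ^ (3 * k + 1) * 37 := by ring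
    have hcop : Nat.Coprime (2 ^ (3 * k + 1)) 37 := Nat.Coprime.pow_left _ (by norm_num)
    rw [hE, hmul _ _ (by positivity) (by norm_num) hcop, h37] at h
    push_cast at h
    linear_combination h / 37
  · have h := hsum (2 ^ k) (2 ^ k) (2 ^ k) (2 ^ k) hp hp hp hp
    have hE : (2 ^ k) ^ 3 + (2 ^ k) ^ 3 + (2 ^ k) ^ 3 + (2 ^ k) ^ 3 = 2 ^ (3 * k + 2) := by ring
    rw [hE] at h
    rw [h]
    push_cast
    ring
end

section
/- If f : ℕ → ℂ is a multiplicative function satisfying f(a³ + b³ + c³ + d³) = f(a³) + f(b³) + f(c³) + f(d³) for all positive integers a, b, c, d, then f(n³) = n³ for every positive integer n. -/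
/-!
Write `F n = f (n ^ 3)`. The multisets `{0, 4, 7, 11}` and `{1, 2, 9, 10}` have equal power sums up
to degree three, so translating them by `t ≥ 1` and using additivity on both sides gives a linear
recursion expressing `F (t + 11)` through the values of `F` at smaller arguments. The cubes satisfy
the same recursion, hence it suffices to know `F n = n ^ 3` for `n ≤ 11` (`cube_of_base`).

On `1, …, 11`, the coincidences between sums of four positive cubes leave a three-dimensional space
of candidates for `F`, spanned by `1`, `n ^ 3` and the nontrivial character modulo `3` (a sum of four
cubes determines the sum of the characters, because cubes are `0` or `±1` modulo `9`). The
normalisation `F 1 = 1` together with two instances of `f (4 * N) = 4 * f N`, `N` odd, removes the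
remaining freedom (`cube_base`).
-/

/-- Strong induction by the recursion coming from the equal power sums of `{0, 4, 7, 11}` and
`{1, 2, 9, 10}`. -/
theorem cube_of_base (f : ℕ → ℂ)
    (hadd : ∀ a b c d : ℕ, 0 < a → 0 < b → 0 < c → 0 < d →
      f (a ^ 3 + b ^ 3 + c ^ 3 + d ^ 3) = f (a ^ 3) + f (b ^ 3) + f (c ^ 3) + f (d ^ 3))
    (hbase : ∀ n : ℕ, 0 < n → n ≤ 11 → f (n ^ 3) = ((n ^ 3 : ℕ) : ℂ)) :
    ∀ n : ℕ, 0 < n → f (n ^ 3) = ((n ^ 3 : ℕ) : ℂ) := by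
  intro n
  induction n using Nat.strong_induction_on with
  | _ n ih =>
    intro hn
    by_cases h : n ≤ 11
    · exact hbase n hn h
    obtain ⟨t, rfl⟩ : ∃ t, n = t + 11 := ⟨n - 11, by omega⟩
    have e : t ^ 3 + (t + 4) ^ 3 + (t + 7) ^ 3 + (t + 11) ^ 3
        = (t + 1) ^ 3 + (t + 2) ^ 3 + (t + 9) ^ 3 + (t + 10) ^ 3 := by ring
    have h1 := hadd t (t + 4) (t + 7) (t + 11) (by omega) (by omega) (by omega) (by omega)
    have h2 := hadd (t + 1) (t + 2) (t + 9) (t + 10) (by omega) (by omega) (by omega) (by omega)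
    rw [e, h2, ih t (by omega) (by omega), ih (t + 4) (by omega) (by omega),
      ih (t + 7) (by omega) (by omega), ih (t + 1) (by omega) (by omega),
      ih (t + 2) (by omega) (by omega), ih (t + 9) (by omega) (by omega),
      ih (t + 10) (by omega) (by omega)] at h1
    push_cast at h1 ⊢
    linear_combination -h1

theorem cube_base (f : ℕ → ℂ)
    (hf1 : f 1 = 1)
    (hmul : ∀ m n : ℕ, 0 < m → 0 < n → Nat.Coprime m n → f (m * n) = f m * f n)
    (hadd : ∀ a b c d : ℕ, 0 < a → 0 < b → 0 < c → 0 < d →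
      f (a ^ 3 + b ^ 3 + c ^ 3 + d ^ 3) = f (a ^ 3) + f (b ^ 3) + f (c ^ 3) + f (d ^ 3)) :
    ∀ n : ℕ, 0 < n → n ≤ 11 → f (n ^ 3) = ((n ^ 3 : ℕ) : ℂ) := by
  -- Two representations of the same number as a sum of four positive cubes.
  have key : ∀ a b c d a2 b2 c2 d2 : ℕ, (0 < a ∧ 0 < b ∧ 0 < c ∧ 0 < d) →
      (0 < a2 ∧ 0 < b2 ∧ 0 < c2 ∧ 0 < d2) →
      a ^ 3 + b ^ 3 + c ^ 3 + d ^ 3 = a2 ^ 3 + b2 ^ 3 + c2 ^ 3 + d2 ^ 3 →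
      f (a ^ 3) + f (b ^ 3) + f (c ^ 3) + f (d ^ 3)
        = f (a2 ^ 3) + f (b2 ^ 3) + f (c2 ^ 3) + f (d2 ^ 3) := by
    rintro a b c d a2 b2 c2 d2 ⟨ha, hb, hc, hd⟩ ⟨ha2, hb2, hc2, hd2⟩ e
    rw [← hadd a b c d ha hb hc hd, e, hadd a2 b2 c2 d2 ha2 hb2 hc2 hd2]
  have r1 := key 1 1 1 6 3 4 4 4 (by norm_num) (by norm_num) (by norm_num)
  have r2 := key 1 1 5 5 1 2 3 6 (by norm_num) (by norm_num) (by norm_num)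
  have r3 := key 1 1 2 8 3 3 5 7 (by norm_num) (by norm_num) (by norm_num)
  have r4 := key 1 4 5 8 2 2 7 7 (by norm_num) (by norm_num) (by norm_num)
  have r5 := key 1 1 3 9 2 4 7 7 (by norm_num) (by norm_num) (by norm_num)
  have r6 := key 1 2 7 8 6 6 6 6 (by norm_num) (by norm_num) (by norm_num)
  have r7 := key 1 1 2 10 1 4 6 9 (by norm_num) (by norm_num) (by norm_num)
  have r8 := key 1 2 3 11 1 5 8 9 (by norm_num) (by norm_num) (by norm_num)
  have h4 := hadd 1 1 1 1 (by norm_num) (by norm_num) (by norm_num) (by norm_num)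
  have h11 := hadd 1 1 1 2 (by norm_num) (by norm_num) (by norm_num) (by norm_num)
  have h44 := hadd 1 2 2 3 (by norm_num) (by norm_num) (by norm_num) (by norm_num)
  have h63 := hadd 1 2 3 3 (by norm_num) (by norm_num) (by norm_num) (by norm_num)
  have h252 := hadd 1 1 5 5 (by norm_num) (by norm_num) (by norm_num) (by norm_num)
  have m44 := hmul 4 11 (by norm_num) (by norm_num) (by norm_num)
  have m252 := hmul 4 63 (by norm_num) (by norm_num) (by norm_num)
  norm_num [hf1] at r1 r2 r3 r4 r5 r6 r7 r8 h4 h11 h44 h63 h252 m44 m252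
  rw [h44, h4, h11] at m44
  rw [h252, h4, h63] at m252
  have x2 : f 8 = 8 := by grind
  have x3 : f 27 = 27 := by grind
  have x5 : f 125 = 125 := by grind
  have x6 : f 216 = 216 := by grind
  have x4 : f 64 = 64 := by grind
  have x7 : f 343 = 343 := by grind
  have x8 : f 512 = 512 := by grind
  have x9 : f 729 = 729 := by grind
  have x10 : f 1000 = 1000 := by grind
  have x11 : f 1331 = 1331 := by grind
  intro n h0 hn
  interval_cases n <;> norm_num [hf1, x2, x3, x4, x5, x6, x7, x8, x9, x10, x11]

theorem cubes_four_fixes_cubes (f : ℕ → ℂ)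
    (hf1 : f 1 = 1)
    (hmul : ∀ m n : ℕ, 0 < m → 0 < n → Nat.Coprime m n → f (m * n) = f m * f n)
    (hadd : ∀ a b c d : ℕ, 0 < a → 0 < b → 0 < c → 0 < d →
      f (a ^ 3 + b ^ 3 + c ^ 3 + d ^ 3) = f (a ^ 3) + f (b ^ 3) + f (c ^ 3) + f (d ^ 3)) :
    ∀ n : ℕ, 0 < n → f (n ^ 3) = ((n ^ 3 : ℕ) : ℂ) :=
  cube_of_base f hadd (cube_base f hf1 hmul hadd)
end

section
/- Let k ≥ 4 be a fixed integer, let p be a prime and r ≥ 1 an integer. Then there exists a positive integer M such that p does not divide M, M is a sum of k positive cubes, and p^r·M is a sum of k positive cubes. -/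
/-!
The core is the identity
`q * ((σ + q)³ + (2σ - q)³) = σ * ((σ + q)³ + (2q - σ)³)`.
With `σ = s³` and `q = p ^ r * t³` it becomes, once `t³` and `s³` are absorbed into the cubes, a
relation `p ^ r * (A³ + B³) = C³ + D³`, where all four numbers are positive as soon as
`σ < 2q` and `q < 2σ`. Such `s` and `t` prime to `p` exist: fix `t` large and prime to `p`; one of
the two consecutive integers around the cube root of `q` is prime to `p` and serves as `s`.
Moreover `A³ + B³ = 9 t³ σ (σ² - σ q + q²) ≡ 9 t³ σ³` modulo `p`, which is nonzero for `p ≠ 3`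
(`exists_two_cubes`).

Adding `p³` times such a relation to a solution for `k` gives a solution for `k + 2` without
changing `M` modulo `p` (`Solvable.add_two`), so only `k = 4` and `k = 5` remain.
For `p ≠ 3`, the case `k = 4` follows from `k = 2` by the same step, and `k = 5` follows by
splitting `B³` and `D³` into four cubes each, by means of `7³ = 1³ + 1³ + 5³ + 6³` or, when
`p = 7`, of `13³ = 5³ + 7³ + 9³ + 10³`.
For `p = 3`, the exponent `r` matters only modulo `3`, and numerical solutions exist in each class.
-/

/-- `n` is a sum of `k` positive cubes. -/
def IsSumCubes (k n : ℕ) : Prop :=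
  ∃ a : Fin k → ℕ, (∀ i, 0 < a i) ∧ n = ∑ i, (a i) ^ 3

/-- Some `M` prime to `p` is such that `M` and `P * M` are both sums of `k` positive cubes. -/
def Solvable (p P k : ℕ) : Prop :=
  ∃ M : ℕ, ¬ p ∣ M ∧ IsSumCubes k M ∧ IsSumCubes k (P * M)

lemma IsSumCubes.one {a : ℕ} (ha : 0 < a) : IsSumCubes 1 (a ^ 3) :=
  ⟨fun _ => a, fun _ => ha, by simp⟩

lemma IsSumCubes.add {j k m n : ℕ} (hm : IsSumCubes j m) (hn : IsSumCubes k n) :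
    IsSumCubes (j + k) (m + n) := by
  obtain ⟨a, ha, rfl⟩ := hm
  obtain ⟨b, hb, rfl⟩ := hn
  refine ⟨Fin.append a b, fun i => ?_, by simp [Fin.sum_univ_add]⟩
  induction i using Fin.addCases with
  | left i => simpa using ha i
  | right i => simpa using hb i

lemma IsSumCubes.scale {k n c : ℕ} (hc : 0 < c) (hn : IsSumCubes k n) :
    IsSumCubes k (c ^ 3 * n) := by
  obtain ⟨a, ha, rfl⟩ := hn
  exact ⟨fun i => c * a i, fun i => Nat.mul_pos hc (ha i), by simp [Finset.mul_sum, mul_pow]⟩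

lemma IsSumCubes.two {a b : ℕ} (ha : 0 < a) (hb : 0 < b) : IsSumCubes 2 (a ^ 3 + b ^ 3) :=
  (IsSumCubes.one ha).add (IsSumCubes.one hb)

lemma IsSumCubes.four {a b c d : ℕ} (ha : 0 < a) (hb : 0 < b) (hc : 0 < c) (hd : 0 < d) :
    IsSumCubes 4 (a ^ 3 + b ^ 3 + (c ^ 3 + d ^ 3)) :=
  (IsSumCubes.two ha hb).add (IsSumCubes.two hc hd)

lemma IsSumCubes.five {a b c d e : ℕ} (ha : 0 < a) (hb : 0 < b) (hc : 0 < c) (hd : 0 < d)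
    (he : 0 < e) : IsSumCubes 5 (a ^ 3 + b ^ 3 + (c ^ 3 + d ^ 3) + e ^ 3) :=
  (IsSumCubes.four ha hb hc hd).add (IsSumCubes.one he)

/-- The cube root of `p ^ r` has a rational approximation `s / t` with `s` and `t` prime to `p`,
close enough for the ratio of `s ^ 3` to `p ^ r * t ^ 3` to lie strictly between `1 / 2` and `2`. -/
lemma exists_approx {p : ℕ} (hp : p.Prime) (r : ℕ) :
    ∃ s t : ℕ, 0 < s ∧ 0 < t ∧ ¬ p ∣ s ∧ ¬ p ∣ t ∧
      s ^ 3 < 2 * (p ^ r * t ^ 3) ∧ p ^ r * t ^ 3 < 2 * s ^ 3 := by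
  have hp2 := hp.two_le
  obtain ⟨t, ht⟩ : ∃ t, t = p * 3 + 1 := ⟨_, rfl⟩
  have hpt : ¬ p ∣ t := by
    rw [ht, Nat.dvd_add_right (dvd_mul_right _ _)]
    exact hp.one_lt.ne' ∘ Nat.dvd_one.mp
  obtain ⟨q, hq⟩ : ∃ q, q = p ^ r * t ^ 3 := ⟨_, rfl⟩
  -- Beyond `4 ^ 3` consecutive cubes have ratio less than `2`, as `5 ^ 3 < 2 * 4 ^ 3`.
  have hq64 : 4 ^ 3 ≤ q := by
    have h1 : 1 ≤ p ^ r := Nat.one_le_pow _ _ hp.pos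
    have h2 : 4 ^ 3 ≤ t ^ 3 := Nat.pow_le_pow_left (by omega) 3
    rw [hq]
    nlinarith
  obtain ⟨s, hs1, hs2⟩ : ∃ s, s ^ 3 ≤ q ∧ q < (s + 1) ^ 3 :=
    ⟨Nat.findGreatest (fun s => s ^ 3 ≤ q) q,
      Nat.findGreatest_spec (P := fun s => s ^ 3 ≤ q) (Nat.zero_le q) (by simp), by
      by_contra! h
      have := Nat.le_findGreatest (P := fun s => s ^ 3 ≤ q)
        (le_trans (Nat.le_self_pow (by norm_num) _) h) h
      omega⟩
  have hs4 : 4 ≤ s := by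
    have := lt_of_pow_lt_pow_left₀ 3 (Nat.zero_le _) (hq64.trans_lt hs2)
    omega
  have hs3 : (s + 1) ^ 3 < 2 * s ^ 3 := by
    obtain ⟨m, rfl⟩ := Nat.exists_eq_add_of_le hs4
    ring_nf
    nlinarith [sq_nonneg m, Nat.zero_le (m ^ 3)]
  by_cases h : p ∣ s
  · refine ⟨s + 1, t, by omega, by omega, ?_, hpt, ?_, ?_⟩
    · rw [Nat.dvd_add_right h]
      exact hp.one_lt.ne' ∘ Nat.dvd_one.mp
    · rw [← hq]
      omega
    · rw [← hq]
      omega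
  · exact ⟨s, t, by omega, by omega, h, hpt, by rw [← hq]; omega, by rw [← hq]; omega⟩

lemma exists_two_cubes {p : ℕ} (hp : p.Prime) {r : ℕ} (hr : 1 ≤ r) :
    ∃ A B C D : ℕ, 0 < A ∧ 0 < B ∧ 0 < C ∧ 0 < D ∧
      p ^ r * (A ^ 3 + B ^ 3) = C ^ 3 + D ^ 3 ∧ (p ≠ 3 → ¬ p ∣ A ^ 3 + B ^ 3) := by
  obtain ⟨s, t, hs, ht, hps, hpt, h1, h2⟩ := exists_approx hp r
  obtain ⟨P, hP⟩ : ∃ P, P = p ^ r := ⟨_, rfl⟩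
  have hpP : p ∣ P := hP ▸ dvd_pow_self p (by omega)
  rw [← hP] at h1 h2 ⊢
  -- `u = 2σ - q` and `v = 2q - σ`, where `σ = s ^ 3` and `q = P * t ^ 3`.
  obtain ⟨u, hu⟩ := Nat.exists_eq_add_of_lt h2
  obtain ⟨v, hv⟩ := Nat.exists_eq_add_of_lt h1
  have hu' : ((u + 1 : ℕ) : ℤ) = 2 * s ^ 3 - P * t ^ 3 := by zify at hu; push_cast; linarith
  have hv' : ((v + 1 : ℕ) : ℤ) = 2 * (P * t ^ 3) - s ^ 3 := by zify at hv; push_cast; linarith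
  refine ⟨t * (s ^ 3 + P * t ^ 3), t * (u + 1), s * (s ^ 3 + P * t ^ 3), s * (v + 1),
    by positivity, by positivity, by positivity, by positivity, ?_, ?_⟩
  · rw [← Nat.cast_inj (R := ℤ)]
    rw [Nat.cast_mul, Nat.cast_add, Nat.cast_add, Nat.cast_pow, Nat.cast_pow, Nat.cast_pow,
      Nat.cast_pow, Nat.cast_mul t (u + 1), Nat.cast_mul s (v + 1), hu', hv']
    push_cast
    ring
  · intro hp3 h
    have hpZ : Prime (p : ℤ) := Nat.prime_iff_prime_int.mp hp
    have h' : (p : ℤ) ∣ 9 * t ^ 3 * s ^ 9 := by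
      have h3 : (p : ℤ) ∣ ((t * (s ^ 3 + P * t ^ 3)) ^ 3 + (t * (u + 1)) ^ 3 : ℕ) :=
        Int.natCast_dvd_natCast.mpr h
      rw [Nat.cast_add, Nat.cast_pow, Nat.cast_pow, Nat.cast_mul t (u + 1), hu'] at h3
      push_cast at h3
      have h4 : (p : ℤ) ∣ P * (9 * t ^ 6 * s ^ 3 * (s ^ 3 - P * t ^ 3)) :=
        (Int.natCast_dvd_natCast.mpr hpP).mul_right _
      have h5 := dvd_add h3 h4
      ring_nf at h5 ⊢
      exact h5
    have h'' : p ∣ 9 * t ^ 3 * s ^ 9 := by exact_mod_cast h'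
    rcases hp.dvd_mul.mp h'' with h6 | h6
    · rcases hp.dvd_mul.mp h6 with h7 | h7
      · exact hp3 ((Nat.prime_dvd_prime_iff_eq hp Nat.prime_three).mp
          (hp.dvd_of_dvd_pow (show p ∣ 3 ^ 2 from h7)))
      · exact hpt (hp.dvd_of_dvd_pow h7)
    · exact hps (hp.dvd_of_dvd_pow h6)

lemma Solvable.add_two {p r k : ℕ} (hp : p.Prime) (hr : 1 ≤ r) (h : Solvable p (p ^ r) k) :
    Solvable p (p ^ r) (k + 2) := by
  obtain ⟨M, hM, h1, h2⟩ := h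
  obtain ⟨A, B, C, D, hA, hB, hC, hD, he, -⟩ := exists_two_cubes hp hr
  refine ⟨M + p ^ 3 * (A ^ 3 + B ^ 3), ?_, h1.add ((IsSumCubes.two hA hB).scale hp.pos), ?_⟩
  · rwa [Nat.dvd_add_left ((dvd_pow_self p (by norm_num)).mul_right _)]
  · rw [mul_add, mul_left_comm, he]
    exact h2.add ((IsSumCubes.two hC hD).scale hp.pos)

/-- Splitting the second cube on each side of `P * (A³ + B³) = C³ + D³` into four cubes, by means
of a cube `c³` that is a sum of four cubes. -/
lemma solvable_five_of_split {p P A B C D c : ℕ} (hp : p.Prime) (hA : 0 < A) (hB : 0 < B)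
    (hC : 0 < C) (hD : 0 < D) (he : P * (A ^ 3 + B ^ 3) = C ^ 3 + D ^ 3)
    (hM : ¬ p ∣ A ^ 3 + B ^ 3) (hc : 0 < c) (hpc : ¬ p ∣ c) (h4 : IsSumCubes 4 (c ^ 3)) :
    Solvable p P 5 := by
  have key : ∀ {X Y : ℕ}, 0 < X → 0 < Y → IsSumCubes 5 (c ^ 3 * (X ^ 3 + Y ^ 3)) := by
    intro X Y hX hY
    have := ((IsSumCubes.one hX).scale hc).add (h4.scale hY)
    rwa [mul_comm (Y ^ 3), ← mul_add] at this
  refine ⟨c ^ 3 * (A ^ 3 + B ^ 3), ?_, key hA hB, ?_⟩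
  · intro h
    exact (hp.dvd_mul.mp h).elim (fun h => hpc (hp.dvd_of_dvd_pow h)) hM
  · rw [mul_left_comm, he]
    exact key hC hD

lemma Solvable.add_exponent {p r k : ℕ} (hp : p.Prime) (m : ℕ) (h : Solvable p (p ^ r) k) :
    Solvable p (p ^ (3 * m + r)) k := by
  obtain ⟨M, hM, h1, h2⟩ := h
  refine ⟨M, hM, h1, ?_⟩
  rw [pow_add, mul_comm 3 m, pow_mul, mul_assoc]
  exact h2.scale (pow_pos hp.pos m)

lemma solvable_three (r : ℕ) : Solvable 3 (3 ^ r) 4 ∧ Solvable 3 (3 ^ r) 5 := by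
  have hlt : r % 3 < 3 := Nat.mod_lt _ (by norm_num)
  have base : ∀ e < 3, Solvable 3 (3 ^ e) 4 ∧ Solvable 3 (3 ^ e) 5 := by
    intro e he
    interval_cases e
    · exact ⟨⟨4, by norm_num, IsSumCubes.four (a := 1) (b := 1) (c := 1) (d := 1)
          one_pos one_pos one_pos one_pos,
        IsSumCubes.four (a := 1) (b := 1) (c := 1) (d := 1) one_pos one_pos one_pos one_pos⟩,
        ⟨5, by norm_num, IsSumCubes.five (a := 1) (b := 1) (c := 1) (d := 1) (e := 1)
          one_pos one_pos one_pos one_pos one_pos,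
        IsSumCubes.five (a := 1) (b := 1) (c := 1) (d := 1) (e := 1)
          one_pos one_pos one_pos one_pos one_pos⟩⟩
    · exact ⟨⟨56, by norm_num,
          IsSumCubes.four (a := 1) (b := 1) (c := 3) (d := 3)
            (by norm_num) (by norm_num) (by norm_num) (by norm_num),
          IsSumCubes.four (a := 2) (b := 2) (c := 3) (d := 5)
            (by norm_num) (by norm_num) (by norm_num) (by norm_num)⟩,
        ⟨19, by norm_num,
          IsSumCubes.five (a := 1) (b := 1) (c := 1) (d := 2) (e := 2)
            (by norm_num) (by norm_num) (by norm_num) (by norm_num) (by norm_num),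
          IsSumCubes.five (a := 1) (b := 1) (c := 1) (d := 3) (e := 3)
            (by norm_num) (by norm_num) (by norm_num) (by norm_num) (by norm_num)⟩⟩
    · exact ⟨⟨56, by norm_num,
          IsSumCubes.four (a := 1) (b := 1) (c := 3) (d := 3)
            (by norm_num) (by norm_num) (by norm_num) (by norm_num),
          IsSumCubes.four (a := 2) (b := 4) (c := 6) (d := 6)
            (by norm_num) (by norm_num) (by norm_num) (by norm_num)⟩,
        ⟨5, by norm_num,
          IsSumCubes.five (a := 1) (b := 1) (c := 1) (d := 1) (e := 1)
            (by norm_num) (by norm_num) (by norm_num) (by norm_num) (by norm_num),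
          IsSumCubes.five (a := 1) (b := 1) (c := 2) (d := 2) (e := 3)
            (by norm_num) (by norm_num) (by norm_num) (by norm_num) (by norm_num)⟩⟩
  have := base (r % 3) hlt
  rw [← Nat.div_add_mod r 3]
  exact ⟨this.1.add_exponent Nat.prime_three _, this.2.add_exponent Nat.prime_three _⟩

lemma solvable_four_five {p : ℕ} (hp : p.Prime) {r : ℕ} (hr : 1 ≤ r) :
    Solvable p (p ^ r) 4 ∧ Solvable p (p ^ r) 5 := by
  by_cases hp3 : p = 3
  · subst hp3
    exact solvable_three r
  obtain ⟨A, B, C, D, hA, hB, hC, hD, he, hM⟩ := exists_two_cubes hp hr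
  have h2 : Solvable p (p ^ r) 2 :=
    ⟨_, hM hp3, IsSumCubes.two hA hB, he ▸ IsSumCubes.two hC hD⟩
  refine ⟨h2.add_two hp hr, ?_⟩
  by_cases hp7 : p = 7
  · exact solvable_five_of_split (c := 13) hp hA hB hC hD he (hM hp3) (by norm_num)
      (by subst hp7; norm_num)
      (IsSumCubes.four (a := 5) (b := 7) (c := 9) (d := 10)
        (by norm_num) (by norm_num) (by norm_num) (by norm_num))
  · exact solvable_five_of_split (c := 7) hp hA hB hC hD he (hM hp3) (by norm_num)
      (fun h => hp7 ((Nat.prime_dvd_prime_iff_eq hp (by norm_num)).mp h))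
      (IsSumCubes.four (a := 1) (b := 1) (c := 5) (d := 6)
        (by norm_num) (by norm_num) (by norm_num) (by norm_num))

lemma solvable_of_four_le {p : ℕ} (hp : p.Prime) {r : ℕ} (hr : 1 ≤ r) (j : ℕ) :
    Solvable p (p ^ r) (j + 4) ∧ Solvable p (p ^ r) (j + 5) := by
  induction j with
  | zero => simpa using solvable_four_five hp hr
  | succ j ih => exact ⟨by simpa [add_right_comm] using ih.2, by
      simpa [add_right_comm] using ih.1.add_two hp hr⟩

theorem exists_M_sum_of_k_cubes (k : ℕ) (hk : 4 ≤ k) (p : ℕ) (hp : p.Prime)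
    (r : ℕ) (hr : 1 ≤ r) :
    ∃ M : ℕ, 0 < M ∧ ¬ p ∣ M ∧
      (∃ a : Fin k → ℕ, (∀ i, 0 < a i) ∧ M = ∑ i, (a i) ^ 3) ∧
      (∃ a : Fin k → ℕ, (∀ i, 0 < a i) ∧ p ^ r * M = ∑ i, (a i) ^ 3) := by
  obtain ⟨j, rfl⟩ := Nat.exists_eq_add_of_le' hk
  obtain ⟨M, hM, h1, h2⟩ := (solvable_of_four_le hp hr j).1
  exact ⟨M, Nat.pos_of_ne_zero fun h => hM (h ▸ dvd_zero p), hM, h1, h2⟩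
end

section
/- Let k ≥ 5 be a fixed integer. If f : ℕ → ℂ is a multiplicative function satisfying f(a₁³ + a₂³ + ⋯ + a_k³) = f(a₁³) + f(a₂³) + ⋯ + f(a_k³) for all positive integers a₁, a₂, …, a_k, then f(n³) = n³ for every positive integer n. -/
/-!
Put `g n = f (n ^ 3)`. Two representations of the same number as a sum of `k` positive cubes give
two equal sums of values of `g`; padding with ones, the same holds for two representations by five
cubes (`sum_eq_of_cubes_eq`). The solution `{0, 4, 7, 11}`, `{1, 2, 9, 10}` of the
Prouhet–Tarry–Escott problem of degree three expresses `g n` for `n ≥ 12` through smaller values, and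
nine numerical coincidences among sums of five cubes of `1, …, 11` express `g 3, …, g 11` through
`g 1 = 1` and `g 2`. Since constants and `n ↦ n ^ 3` satisfy the same relations, `g` is affine
in `n ^ 3`: `g n = 1 + A * (n ^ 3 - 1)` (`exists_affine`).

Some cube is a sum of exactly `k` positive cubes (`exists_cube_eq_sum_cubes`), and evaluating `f`
there in two ways yields `(k - 1) * (1 - A) = 0`, hence `A = 1`.
-/

/-- For every `k ≥ 3` some cube is a sum of exactly `k` positive cubes. The induction goes from `k`
to `k + 2` by scaling by `6` and splitting one summand along `6 ^ 3 = 3 ^ 3 + 4 ^ 3 + 5 ^ 3`. -/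
theorem exists_cube_eq_sum_cubes : ∀ k : ℕ, ∃ n : ℕ, 0 < n ∧
    ∃ a : Fin (k + 3) → ℕ, (∀ i, 0 < a i) ∧ ∑ i, (a i) ^ 3 = n ^ 3
  | 0 => ⟨6, by norm_num, ![3, 4, 5], by decide, by decide⟩
  | 1 => ⟨20, by norm_num, ![11, 12, 13, 14], by decide, by simp [Fin.sum_univ_succ]⟩
  | k + 2 => by
    obtain ⟨n, hn, a, ha, hs⟩ := exists_cube_eq_sum_cubes k
    refine ⟨6 * n, by positivity, Fin.cons (3 * a 0) (Fin.cons (4 * a 0) (Fin.cons (5 * a 0)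
      (fun i : Fin (k + 2) => 6 * a i.succ))), ?_, ?_⟩
    · have h0 := ha 0
      refine Fin.cases ?_ (Fin.cases ?_ (Fin.cases ?_ fun i => ?_)) <;>
        simp only [Fin.cons_zero, Fin.cons_succ]
      · positivity
      · positivity
      · positivity
      · have := ha i.succ
        positivity
    · rw [Fin.sum_univ_succ] at hs
      rw [Fin.sum_univ_succ, Fin.sum_univ_succ, Fin.sum_univ_succ]
      simp only [Fin.cons_zero, Fin.cons_succ, mul_pow, ← Finset.mul_sum, ← hs]
      ring

/-- Padding with ones turns the additivity on `k ≥ 5` cubes into relations between five values. -/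
theorem sum_eq_of_cubes_eq {k : ℕ} (hk : 5 ≤ k) {f : ℕ → ℂ}
    (hadd : ∀ a : Fin k → ℕ, (∀ i, 0 < a i) → f (∑ i, (a i) ^ 3) = ∑ i, f ((a i) ^ 3))
    (a b : Fin 5 → ℕ) (ha : ∀ i, 0 < a i) (hb : ∀ i, 0 < b i)
    (hab : ∑ i, (a i) ^ 3 = ∑ i, (b i) ^ 3) :
    ∑ i, f ((a i) ^ 3) = ∑ i, f ((b i) ^ 3) := by
  obtain ⟨m, rfl⟩ := Nat.exists_eq_add_of_le hk
  have pad : ∀ c : Fin 5 → ℕ, (∀ i, 0 < c i) →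
      f (∑ i, (c i) ^ 3 + m) = ∑ i, f ((c i) ^ 3) + m * f 1 := by
    intro c hc
    have h := hadd (Fin.append c fun _ => 1) (Fin.addCases (by simpa using hc) (by simp))
    simp only [Fin.sum_univ_add (a := 5) (b := m), Fin.append_left, Fin.append_right] at h
    simpa using h
  have h := pad a ha
  rw [hab, pad b hb] at h
  exact (add_right_cancel h).symm

/-- The relations between sums of five cubes force `n ^ 3 ↦ f (n ^ 3)` to be affine. -/
theorem exists_affine {f : ℕ → ℂ} (hf1 : f 1 = 1)
    (hrel : ∀ a b : Fin 5 → ℕ, (∀ i, 0 < a i) → (∀ i, 0 < b i) →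
      ∑ i, (a i) ^ 3 = ∑ i, (b i) ^ 3 → ∑ i, f ((a i) ^ 3) = ∑ i, f ((b i) ^ 3)) :
    ∃ A : ℂ, ∀ n : ℕ, 0 < n → f (n ^ 3) = 1 + A * ((n : ℂ) ^ 3 - 1) := by
  obtain ⟨g, hg⟩ : ∃ g : ℕ → ℂ, ∀ n, f (n ^ 3) = g n := ⟨_, fun _ => rfl⟩
  have g1 : g 1 = 1 := by rw [← hg]; simpa using hf1
  simp only [hg] at hrel ⊢
  have rel : ∀ a b c d e p q r s t : ℕ,
      (0 < a ∧ 0 < b ∧ 0 < c ∧ 0 < d ∧ 0 < e) →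
      (0 < p ∧ 0 < q ∧ 0 < r ∧ 0 < s ∧ 0 < t) →
      a ^ 3 + b ^ 3 + c ^ 3 + d ^ 3 + e ^ 3 = p ^ 3 + q ^ 3 + r ^ 3 + s ^ 3 + t ^ 3 →
      g a + g b + g c + g d + g e = g p + g q + g r + g s + g t := by
    intro a b c d e p q r s t h hpos heq
    have := hrel ![a, b, c, d, e] ![p, q, r, s, t]
      (by simpa [Fin.forall_fin_succ] using h) (by simpa [Fin.forall_fin_succ] using hpos)
      (by simpa [Fin.sum_univ_succ, add_assoc] using heq)
    simpa [Fin.sum_univ_succ, add_assoc] using this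
  have r1 := rel 1 1 3 4 4 2 2 2 2 5 (by decide) (by decide) (by norm_num)
  have r2 := rel 1 1 1 1 6 1 3 4 4 4 (by decide) (by decide) (by norm_num)
  have r3 := rel 1 1 1 5 5 1 1 2 3 6 (by decide) (by decide) (by norm_num)
  have r4 := rel 1 1 2 2 7 3 3 3 4 6 (by decide) (by decide) (by norm_num)
  have r5 := rel 1 1 1 2 8 1 3 3 5 7 (by decide) (by decide) (by norm_num)
  have r6 := rel 1 1 3 3 8 2 4 4 6 6 (by decide) (by decide) (by norm_num)
  have r7 := rel 1 1 1 3 9 1 2 4 7 7 (by decide) (by decide) (by norm_num)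
  have r8 := rel 1 1 1 2 10 1 1 4 6 9 (by decide) (by decide) (by norm_num)
  have r9 := rel 1 1 1 2 11 3 3 6 7 9 (by decide) (by decide) (by norm_num)
  simp only [g1] at r1 r2 r3 r4 r5 r6 r7 r8 r9
  -- The slope is read off from `g 1 = 1` and `g 2 = 1 + 7 * A`.
  refine ⟨(g 2 - 1) / 7, fun n => ?_⟩
  induction n using Nat.strong_induction_on with
  | _ n ih =>
    intro hn
    rcases lt_or_ge n 12 with hlt | hge
    · -- The coefficients solve the linear system `r1, …, r9` for the unknowns `g 3, …, g 11`.
      interval_cases n <;> push_cast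
      · linear_combination g1
      · ring
      · linear_combination (5/7) * r1 + (3/7) * r2 + (2/7) * r3 - (1/7) * r4 - (1/7) * r5
          + (1/7) * r6
      · linear_combination 2 * r1 + r2 + r3
      · linear_combination (26/7) * r1 + (17/7) * r2 + (16/7) * r3 - (1/7) * r4 - (1/7) * r5
          + (1/7) * r6
      · linear_combination (47/7) * r1 + (31/7) * r2 + (23/7) * r3 - (1/7) * r4 - (1/7) * r5
          + (1/7) * r6
      · linear_combination (76/7) * r1 + (47/7) * r2 + (36/7) * r3 + (3/7) * r4 - (4/7) * r5
          + (4/7) * r6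
      · linear_combination 16 * r1 + 10 * r2 + 8 * r3 + r6
      · linear_combination 23 * r1 + 14 * r2 + 11 * r3 + r4 - r5 + r6 + r7
      · linear_combination (222/7) * r1 + (136/7) * r2 + (107/7) * r3 + (6/7) * r4 - (8/7) * r5
          + (8/7) * r6 + r7 + r8
      · linear_combination 42 * r1 + 26 * r2 + 20 * r3 + r4 - 2 * r5 + 2 * r6 + r7 + r9
    · obtain ⟨m, rfl⟩ := Nat.exists_eq_add_of_le' hge
      have h := rel (m + 12) (m + 8) (m + 5) (m + 1) 1 (m + 11) (m + 10) (m + 3) (m + 2) 1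
        (by simp) (by simp) (by ring)
      rw [ih (m + 8) (by lia) (by lia), ih (m + 5) (by lia) (by lia),
        ih (m + 1) (by lia) (by lia), ih (m + 11) (by lia) (by lia),
        ih (m + 10) (by lia) (by lia), ih (m + 3) (by lia) (by lia),
        ih (m + 2) (by lia) (by lia)] at h
      push_cast at h ⊢
      linear_combination h

theorem cubes_k_fixes_cubes (k : ℕ) (hk : 5 ≤ k) (f : ℕ → ℂ)
    (hf1 : f 1 = 1)
    (hmul : ∀ m n : ℕ, 0 < m → 0 < n → Nat.Coprime m n → f (m * n) = f m * f n)
    (hadd : ∀ a : Fin k → ℕ, (∀ i, 0 < a i) →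
      f (∑ i, (a i) ^ 3) = ∑ i, f ((a i) ^ 3)) :
    ∀ n : ℕ, 0 < n → f (n ^ 3) = ((n ^ 3 : ℕ) : ℂ) := by
  obtain ⟨A, hA⟩ := exists_affine hf1 (sum_eq_of_cubes_eq hk hadd)
  obtain ⟨j, rfl⟩ := Nat.exists_eq_add_of_le' (show 3 ≤ k by lia)
  obtain ⟨N, hN, a, ha, hs⟩ := exists_cube_eq_sum_cubes j
  have h := hadd a ha
  have hsC : ∑ i, (a i : ℂ) ^ 3 = (N : ℂ) ^ 3 := by exact_mod_cast hs
  rw [hs, hA N hN, Finset.sum_congr rfl fun i _ => hA (a i) (ha i)] at h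
  simp only [Finset.sum_add_distrib, ← Finset.mul_sum, Finset.sum_sub_distrib, hsC,
    Finset.sum_const, Finset.card_univ, Fintype.card_fin, nsmul_eq_mul] at h
  push_cast at h
  have hprod : ((j : ℂ) + 2) * (A - 1) = 0 := by linear_combination h
  have hj : (j : ℂ) + 2 ≠ 0 := by exact_mod_cast (by lia : j + 2 ≠ 0)
  have hA1 : A = 1 := sub_eq_zero.mp ((mul_eq_zero.mp hprod).resolve_left hj)
  intro n hn
  rw [hA n hn, hA1]
  push_cast
  ring
end

section
/- For every integer k ≥ 9, all but finitely many positive integers can be written as a sum of k positive cubes; that is, the set of positive integers that are not sums of k positive cubes is finite. -/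
/-!
Every large `N` is a sum of nine positive cubes by the method of Wieferich and Landau; further
summands `1 ^ 3` then give every `k ≥ 9`.

The engine is the identity
`∑ i, ((a + x i) ^ 3 + (a - x i) ^ 3) = 6 * a * (a ^ 2 + (x 1 ^ 2 + x 2 ^ 2 + x 3 ^ 2))`:
if `m < a ^ 2` is a sum of three squares, then `6 * a * (a ^ 2 + m)` is a sum of six positive
cubes. Take `a = 5 ^ (3 * w)` with `16 * a ^ 3 ≤ N < 16 * 5 ^ 9 * a ^ 3`. Three cubes bring `N` into
this shape: a cube `A ^ 3` adjusts the size, so that `8 * a ^ 3 ≤ N - A ^ 3 < 12 * a ^ 3` and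
`5 ∤ N - A ^ 3`; a cube `B ^ 3` with `0 < B < a` makes `N - A ^ 3 - B ^ 3` divisible by `a`, because
every unit modulo a power of `5` is a cube; and a cube `(5 ^ w * c) ^ 3 = a * c ^ 3` with `c ≤ 48`
fixes the residue modulo `6` and the 2-adic shape of the resulting `m`.

What remains is the three-squares theorem for `m ≡ 2 [MOD 4]` and `m ≡ 1, 3 [MOD 8]`, which is
proved after Dirichlet: by his theorem on primes in progressions and by quadratic reciprocity, `m`
is a diagonal coefficient of a positive definite integral ternary form of determinant `1`
(`sum_three_squares_of_dvd`), and by reduction theory each such form is equivalent to the sum of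
three squares (`gram_of_det_one`).
-/

/-! ### Ternary forms of determinant one -/

/-- The symmetric matrix with diagonal `a, b, c` and off-diagonal entries `d` (position `23`),
`e` (position `13`), `g` (position `12`) is the Gram matrix of three vectors of `ℤ³`. -/
def IsGram (a b c d e g : ℤ) : Prop :=
  ∃ u₁ u₂ u₃ v₁ v₂ v₃ w₁ w₂ w₃ : ℤ,
    a = u₁ ^ 2 + u₂ ^ 2 + u₃ ^ 2 ∧ b = v₁ ^ 2 + v₂ ^ 2 + v₃ ^ 2 ∧ c = w₁ ^ 2 + w₂ ^ 2 + w₃ ^ 2 ∧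
    d = v₁ * w₁ + v₂ * w₂ + v₃ * w₃ ∧ e = u₁ * w₁ + u₂ * w₂ + u₃ * w₃ ∧
    g = u₁ * v₁ + u₂ * v₂ + u₃ * v₃

lemma IsGram.swap_uv {a b c d e g : ℤ} (h : IsGram b a c e d g) : IsGram a b c d e g := by
  obtain ⟨u₁, u₂, u₃, v₁, v₂, v₃, w₁, w₂, w₃, h1, h2, h3, h4, h5, h6⟩ := h
  exact ⟨v₁, v₂, v₃, u₁, u₂, u₃, w₁, w₂, w₃, h2, h1, h3, h5, h4, by rw [h6]; ring⟩

lemma IsGram.swap_vw {a b c d e g : ℤ} (h : IsGram a c b d g e) : IsGram a b c d e g := by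
  obtain ⟨u₁, u₂, u₃, v₁, v₂, v₃, w₁, w₂, w₃, h1, h2, h3, h4, h5, h6⟩ := h
  exact ⟨u₁, u₂, u₃, w₁, w₂, w₃, v₁, v₂, v₃, h1, h3, h2, by rw [h4]; ring, h6, h5⟩

/-- Undoes the substitution `v ↦ v + k • u`. -/
lemma IsGram.shift_vu {a b c d e g : ℤ} (k : ℤ)
    (h : IsGram a (b + 2 * k * g + k ^ 2 * a) c (d + k * e) e (g + k * a)) :
    IsGram a b c d e g := by
  obtain ⟨u₁, u₂, u₃, v₁, v₂, v₃, w₁, w₂, w₃, h1, h2, h3, h4, h5, h6⟩ := h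
  refine ⟨u₁, u₂, u₃, v₁ - k * u₁, v₂ - k * u₂, v₃ - k * u₃, w₁, w₂, w₃, h1, ?_, h3, ?_, h5, ?_⟩
  · linear_combination h2 - 2 * k * h6 + k ^ 2 * h1
  · linear_combination h4 - k * h5
  · linear_combination h6 - k * h1

/-- Undoes the substitution `w ↦ w + k • v`. -/
lemma IsGram.shift_wv {a b c d e g : ℤ} (k : ℤ)
    (h : IsGram a b (c + 2 * k * d + k ^ 2 * b) (d + k * b) (e + k * g) g) :
    IsGram a b c d e g := by
  obtain ⟨u₁, u₂, u₃, v₁, v₂, v₃, w₁, w₂, w₃, h1, h2, h3, h4, h5, h6⟩ := h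
  refine ⟨u₁, u₂, u₃, v₁, v₂, v₃, w₁ - k * v₁, w₂ - k * v₂, w₃ - k * v₃, h1, h2, ?_, ?_, ?_, h6⟩
  · linear_combination h3 - 2 * k * h4 + k ^ 2 * h2
  · linear_combination h4 - k * h2
  · linear_combination h5 - k * h6

/-- Undoes the substitution `w ↦ w + k • u`. -/
lemma IsGram.shift_wu {a b c d e g : ℤ} (k : ℤ)
    (h : IsGram a b (c + 2 * k * e + k ^ 2 * a) (d + k * g) (e + k * a) g) :
    IsGram a b c d e g :=
  .swap_vw (.shift_vu k (.swap_vw h))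

lemma exists_shift (x : ℤ) {y : ℤ} (hy : 0 < y) :
    ∃ k : ℤ, 2 * (x + k * y) ≤ y ∧ -y ≤ 2 * (x + k * y) := by
  have h1 := Int.emod_add_mul_ediv x y
  have h2 := Int.emod_nonneg x hy.ne'
  have h3 := Int.emod_lt_of_pos x hy
  by_cases h : 2 * (x % y) ≤ y
  · exact ⟨-(x / y), by linarith [mul_comm y (x / y)], by linarith [mul_comm y (x / y)]⟩
  · exact ⟨-(x / y) - 1, by linarith [mul_comm y (x / y)], by linarith [mul_comm y (x / y)]⟩

/-- A positive definite integral ternary form of determinant `1` is equivalent to the sum of three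
squares. Positivity is Sylvester's criterion on the first two leading minors. The descent lowers
the sum of these minors: reducing the binary form `(A, B, C)` complementary to `a` lowers
`A = a * b - g ^ 2`, and reducing `(a, g, b)` lowers `a`. When neither applies,
`3 * A ^ 2 ≤ 4 * a` and `3 * a ^ 2 ≤ 4 * A`, which forces `a = A = 1`. -/
theorem gram_of_det_one (s : ℕ) : ∀ a b c d e g : ℤ, 0 < a → 0 < a * b - g ^ 2 →
    a * b * c + 2 * d * e * g - a * d ^ 2 - b * e ^ 2 - c * g ^ 2 = 1 →
    a + (a * b - g ^ 2) ≤ s → IsGram a b c d e g := by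
  induction s with
  | zero =>
    intro a b c d e g ha hA _ hs
    push_cast at hs
    linarith
  | succ s ih =>
    intro a b c d e g ha hA hdet hs
    push_cast at hs
    obtain ⟨k, hk1, hk2⟩ := exists_shift (a * d - g * e) hA
    apply IsGram.shift_wv k
    have hB : a * (d + k * b) - g * (e + k * g) = a * d - g * e + k * (a * b - g ^ 2) := by ring
    rw [← hB] at hk1 hk2
    have hdet' : a * b * (c + 2 * k * d + k ^ 2 * b) + 2 * (d + k * b) * (e + k * g) * g
        - a * (d + k * b) ^ 2 - b * (e + k * g) ^ 2 - (c + 2 * k * d + k ^ 2 * b) * g ^ 2 = 1 := by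
      linear_combination hdet
    generalize c + 2 * k * d + k ^ 2 * b = c at *
    generalize d + k * b = d at *
    generalize e + k * g = e at *
    clear hdet hB
    -- the binary form `(A, B, C)` has determinant `a * det = a`
    have hAC : (a * b - g ^ 2) * (a * c - e ^ 2) = a + (a * d - g * e) ^ 2 := by
      linear_combination a * hdet'
    by_cases hC : a * c - e ^ 2 < a * b - g ^ 2
    · apply IsGram.swap_vw
      refine ih a c b d g e ha ?_ (by linear_combination hdet') (by linarith)
      by_contra hneg
      nlinarith [sq_nonneg (a * d - g * e)]
    push Not at hC
    have hA2 : 3 * (a * b - g ^ 2) ^ 2 ≤ 4 * a := by nlinarith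
    obtain ⟨l, hl1, hl2⟩ := exists_shift g ha
    apply IsGram.shift_vu l
    have hAinv : a * (b + 2 * l * g + l ^ 2 * a) - (g + l * a) ^ 2 = a * b - g ^ 2 := by ring
    have hBinv : a * (d + l * e) - (g + l * a) * e = a * d - g * e := by ring
    have hdet2 : a * (b + 2 * l * g + l ^ 2 * a) * c + 2 * (d + l * e) * e * (g + l * a)
        - a * (d + l * e) ^ 2 - (b + 2 * l * g + l ^ 2 * a) * e ^ 2 - c * (g + l * a) ^ 2 = 1 := by
      linear_combination hdet'
    rw [← hAinv] at hA2 hA hs hk1 hk2 hAC hC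
    rw [← hBinv] at hk1 hk2 hAC
    generalize b + 2 * l * g + l ^ 2 * a = b at *
    generalize d + l * e = d at *
    generalize g + l * a = g at *
    clear hdet' hAinv hBinv
    have hb : 0 < b := by
      by_contra hneg
      nlinarith [sq_nonneg g]
    by_cases hba : b < a
    · apply IsGram.swap_uv
      exact ih b a c e d g hb (by linarith) (by linear_combination hdet2) (by linarith)
    push Not at hba
    have ha2 : 3 * a ^ 2 ≤ 4 * (a * b - g ^ 2) := by nlinarith
    have ha1 : a = 1 := by
      generalize a * b - g ^ 2 = A at *
      have hle : a ≤ 1 := by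
        by_contra! hlt
        -- adding the two bounds gives `3 * (a ^ 2 + A ^ 2) ≤ 4 * (a + A)`, impossible for `a ≥ 2`
        have : 3 * A ^ 2 - 4 * A + 3 * a ^ 2 - 4 * a ≤ 0 := by linarith
        nlinarith [sq_nonneg (3 * A - 2)]
      omega
    subst ha1
    have hg : g = 0 := by omega
    subst hg
    have hb1 : b = 1 := by nlinarith
    subst hb1
    have hd : d = 0 := by omega
    subst hd
    apply IsGram.shift_wu (-e)
    have hc : c = 1 + e ^ 2 := by linarith
    subst hc
    exact ⟨1, 0, 0, 0, 1, 0, 0, 0, 1, by ring, by ring, by ring, by ring, by ring, by ring⟩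

/-- The form with Gram matrix `((g ^ 2 + β) / (n * β - 1), g, 1; g, n * β - 1, 0; 1, 0, n)` has
determinant `1`, so that its coefficient `n` is a sum of three squares. -/
lemma sum_three_squares_of_dvd {n β g : ℤ} (hβ : 0 < β) (hn : 2 ≤ n * β)
    (h : n * β - 1 ∣ g ^ 2 + β) : ∃ x y z : ℤ, n = x ^ 2 + y ^ 2 + z ^ 2 := by
  obtain ⟨a, ha⟩ := h
  have hpos : 0 < a := by
    by_contra hneg
    nlinarith [sq_nonneg g]
  have hmin : a * (n * β - 1) - g ^ 2 = β := by linarith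
  obtain ⟨u₁, u₂, u₃, v₁, v₂, v₃, w₁, w₂, w₃, -, -, h3, -⟩ :=
    gram_of_det_one (a + β).toNat a (n * β - 1) n 0 1 g hpos (by linarith)
      (by linear_combination n * hmin) (by rw [hmin]; omega)
  exact ⟨w₁, w₂, w₃, h3⟩

/-! ### Three squares -/

/-- A natural number that is a sum of three squares, zero allowed. -/
def IsThreeSq (n : ℕ) : Prop := ∃ x y z : ℕ, n = x ^ 2 + y ^ 2 + z ^ 2

lemma IsThreeSq.of_int {n : ℕ} (h : ∃ x y z : ℤ, (n : ℤ) = x ^ 2 + y ^ 2 + z ^ 2) :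
    IsThreeSq n := by
  obtain ⟨x, y, z, h⟩ := h
  refine ⟨x.natAbs, y.natAbs, z.natAbs, ?_⟩
  zify
  simpa using h

lemma IsThreeSq.four_mul {n : ℕ} (h : IsThreeSq n) : IsThreeSq (4 * n) := by
  obtain ⟨x, y, z, rfl⟩ := h
  exact ⟨2 * x, 2 * y, 2 * z, by ring⟩

/-- A Jacobi symbol `1` at a prime `p`, read as a divisibility. -/
lemma exists_dvd_sq_add {p β : ℕ} (hp : p.Prime) (h : jacobiSym (-β) p = 1) :
    ∃ g : ℤ, (p : ℤ) ∣ g ^ 2 + β := by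
  have : Fact p.Prime := ⟨hp⟩
  obtain ⟨r, hr⟩ := ZMod.isSquare_of_jacobiSym_eq_one h
  obtain ⟨g, rfl⟩ := ZMod.intCast_surjective r
  refine ⟨g, (ZMod.intCast_zmod_eq_zero_iff_dvd _ p).1 ?_⟩
  push_cast at hr ⊢
  linear_combination -hr

lemma jacobiSym_neg_of_one_mod_four {p β : ℕ} (hp : p % 4 = 1) (hβ : Odd β) :
    jacobiSym (-β) p = jacobiSym p β := by
  have hodd : Odd p := Nat.odd_iff.2 (by omega)
  rw [jacobiSym.neg _ hodd, ZMod.χ₄_nat_one_mod_four hp, one_mul,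
    jacobiSym.quadratic_reciprocity_one_mod_four' hβ hp]

lemma isThreeSq_of_two_mod_four {n : ℕ} (hn : n % 4 = 2) : IsThreeSq n := by
  have hcop : (n - 1).Coprime (4 * n) := by
    have h1 : (n - 1).Coprime n := by
      have := Nat.coprime_self_add_right (m := n - 1) (n := 1)
      rw [show n - 1 + 1 = n by omega] at this
      simp [this]
    have h2 : (n - 1).Coprime 2 := Nat.coprime_two_right.2 (Nat.odd_iff.2 (by omega))
    exact Nat.Coprime.mul_right (by simpa using h2.pow_right 2) h1
  obtain ⟨p, hpn, hp, hmod⟩ :=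
    Nat.forall_exists_prime_gt_and_modEq n (q := 4 * n) (by omega) hcop
  obtain ⟨j, hj⟩ := (Nat.modEq_iff_dvd' (by omega)).1 hmod.symm
  obtain ⟨β, hβ⟩ : ∃ β, β = 4 * j + 1 := ⟨_, rfl⟩
  -- `p = n * β - 1` with `β ≡ 1 [MOD 4]`
  have hpβ : p + 1 = n * β := by
    have : p + 1 = 4 * n * j + n := by omega
    rw [this, hβ]; ring
  have hp4 : p % 4 = 1 := by
    have : 4 * n * j = 4 * (n * j) := by ring
    omega
  have hβodd : Odd β := Nat.odd_iff.2 (by omega)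
  have hJ : jacobiSym (-β) p = 1 := by
    rw [jacobiSym_neg_of_one_mod_four hp4 hβodd]
    have : jacobiSym p β = jacobiSym (-1) β := by
      apply jacobiSym.mod_left'
      refine Int.ModEq.symm ((Int.modEq_iff_dvd).2 ⟨n, ?_⟩)
      have : (p : ℤ) + 1 = n * β := by exact_mod_cast hpβ
      linarith
    rw [this, jacobiSym.at_neg_one hβodd, ZMod.χ₄_nat_one_mod_four (by omega)]
  obtain ⟨g, hg⟩ := exists_dvd_sq_add hp hJ
  have hpz : (n : ℤ) * β - 1 = p := by
    have : (p : ℤ) + 1 = n * β := by exact_mod_cast hpβ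
    linarith
  refine .of_int (sum_three_squares_of_dvd (β := β) (g := g) (by omega) ?_ (by rwa [hpz]))
  have := hp.two_le
  omega

/-- For `n ≡ 1` or `3 [MOD 8]`, the modulus `n * β - 1` is taken to be twice a prime, where
`β ≡ i [MOD 8]` with `i = 3` or `i = 1` respectively. -/
lemma isThreeSq_of_odd {n i : ℕ} (h : n % 8 = 1 ∧ i = 3 ∨ n % 8 = 3 ∧ i = 1) : IsThreeSq n := by
  obtain ⟨q, hq⟩ : ∃ q, q = (i * n - 1) / 2 := ⟨_, rfl⟩
  have hq2 : 2 * q + 1 = i * n := by rcases h with ⟨h, rfl⟩ | ⟨h, rfl⟩ <;> omega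
  have hq4 : q % 4 = 1 := by rcases h with ⟨h, rfl⟩ | ⟨h, rfl⟩ <;> omega
  have hcop : q.Coprime (4 * n) := by
    have h1 : q.Coprime (i * n) := by
      rw [← hq2]
      simp
    have h2 : q.Coprime 2 := Nat.coprime_two_right.2 (Nat.odd_iff.2 (by omega))
    exact Nat.Coprime.mul_right (by simpa using h2.pow_right 2) (h1.coprime_mul_left_right)
  obtain ⟨p, hpn, hp, hmod⟩ :=
    Nat.forall_exists_prime_gt_and_modEq q (q := 4 * n) (by omega) hcop
  obtain ⟨j, hj⟩ := (Nat.modEq_iff_dvd' (by omega)).1 hmod.symm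
  obtain ⟨β, hβ⟩ : ∃ β, β = 8 * j + i := ⟨_, rfl⟩
  have hpβ : 2 * p + 1 = n * β := by
    have : 2 * p + 1 = 2 * (4 * n * j) + i * n := by omega
    rw [this, hβ]; ring
  have hp4 : p % 4 = 1 := by
    have : 4 * n * j = 4 * (n * j) := by ring
    omega
  have hβodd : Odd β := Nat.odd_iff.2 (by omega)
  have hpz : (n : ℤ) * β - 1 = 2 * p := by
    have : 2 * (p : ℤ) + 1 = n * β := by exact_mod_cast hpβ
    linarith
  have hJ : jacobiSym (-β) p = 1 := by
    rw [jacobiSym_neg_of_one_mod_four hp4 hβodd]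
    -- `J(-2 | β) = 1` as `β ≡ 1, 3 [MOD 8]`, and `-2 * p ≡ 1 [ZMOD β]`
    have h1 : jacobiSym (-2) β = 1 := by
      rw [jacobiSym.at_neg_two hβodd, ZMod.χ₈'_nat_eq_if_mod_eight]
      have : β % 8 = 1 ∨ β % 8 = 3 := by omega
      rw [if_neg (by omega), if_pos this]
    have h2 : jacobiSym (-2 * p) β = 1 := by
      rw [← jacobiSym.one_left β]
      apply jacobiSym.mod_left'
      exact (Int.modEq_iff_dvd).2 ⟨n, by linarith⟩
    rwa [jacobiSym.mul_left, h1, one_mul] at h2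
  obtain ⟨g₀, hg₀⟩ := exists_dvd_sq_add hp hJ
  -- an odd root makes `g ^ 2 + β` even as well
  obtain ⟨g, hg, hgodd⟩ : ∃ g : ℤ, (p : ℤ) ∣ g ^ 2 + β ∧ Odd g := by
    rcases Int.even_or_odd g₀ with he | ho
    · refine ⟨g₀ + p, ?_, he.add_odd (by exact_mod_cast Nat.odd_iff.2 (by omega))⟩
      have : (g₀ + p) ^ 2 + β = (g₀ ^ 2 + β) + p * (2 * g₀ + p) := by ring
      rw [this]
      exact dvd_add hg₀ (dvd_mul_right _ _)
    · exact ⟨g₀, hg₀, ho⟩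
  have h2dvd : (2 : ℤ) ∣ g ^ 2 + β :=
    even_iff_two_dvd.1 (hgodd.pow.add_odd (by exact_mod_cast hβodd))
  have hcop2 : IsCoprime (2 : ℤ) p := by
    rw [Int.isCoprime_iff_gcd_eq_one]
    exact Nat.coprime_two_left.2 (Nat.odd_iff.2 (by omega))
  refine .of_int (sum_three_squares_of_dvd (β := β) (g := g) (by omega) ?_ ?_)
  · have := hp.two_le
    omega
  · rw [hpz]
    exact hcop2.mul_dvd h2dvd hg

/-! ### Cubes -/

/-- The map `x ↦ x ^ 3` is bijective on `(ZMod (5 ^ j))ˣ`, whose order `4 * 5 ^ (j - 1)` is prime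
to `3`. -/
lemma exists_cube_modEq {j n : ℕ} (hj : 0 < j) (hn : ¬ 5 ∣ n) :
    ∃ B, 0 < B ∧ B < 5 ^ j ∧ B ^ 3 ≡ n [MOD 5 ^ j] := by
  have hp5 : Nat.Prime 5 := by norm_num
  have hlt : 1 < 5 ^ j := Nat.one_lt_pow hj.ne' (by norm_num)
  have : NeZero (5 ^ j) := ⟨by positivity⟩
  have : Fact (1 < 5 ^ j) := ⟨hlt⟩
  have hcop : n.Coprime (5 ^ j) := ((hp5.coprime_iff_not_dvd.2 hn).symm).pow_right j
  have hcard : (Nat.card (ZMod (5 ^ j))ˣ).Coprime 3 := by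
    rw [Nat.card_eq_fintype_card, ZMod.card_units_eq_totient, Nat.totient_prime_pow hp5 hj]
    exact Nat.Coprime.mul_left (Nat.Coprime.pow_left _ (by norm_num)) (by norm_num)
  obtain ⟨u, hu⟩ := (powCoprime hcard).surjective (ZMod.unitOfCoprime n hcop)
  have hcube : (u : ZMod (5 ^ j)) ^ 3 = n := by
    have := congrArg Units.val hu
    simpa using this
  refine ⟨(u : ZMod (5 ^ j)).val, ?_, ZMod.val_lt _, ?_⟩
  · exact Nat.pos_of_ne_zero fun h => u.ne_zero ((ZMod.val_eq_zero _).1 h)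
  · rw [← ZMod.natCast_eq_natCast_iff]
    push_cast
    rw [ZMod.natCast_zmod_val, hcube]

/-- The three-square cases above, times `6`, scaled by `1` or `4`, are reached from every residue
modulo `192 = 6 * 32` by subtracting a cube. The multiple `110592 = 48 ^ 3` of `192` keeps the
subtraction from truncating. -/
lemma cube_residues : ∀ r : ℕ, r < 192 → ∃ c : ℕ, c < 48 ∧
    let s := (r + 110592 - (c + 1) ^ 3) % 192
    s % 24 = 12 ∨ s % 48 = 6 ∨ s % 48 = 18 ∨ s % 96 = 48 ∨ s = 24 ∨ s = 72 := by
  decide +kernel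

lemma exists_sub_cube (R : ℕ) (hR : 48 ^ 3 ≤ R) :
    ∃ c m, 0 < c ∧ c ≤ 48 ∧ R = c ^ 3 + 6 * m ∧ IsThreeSq m := by
  obtain ⟨c, hc, h⟩ := cube_residues (R % 192) (Nat.mod_lt _ (by norm_num))
  have hle : (c + 1) ^ 3 ≤ R := (Nat.pow_le_pow_left (by omega) 3).trans hR
  obtain ⟨S, hS⟩ := Nat.exists_eq_add_of_le hle
  have hs : (R % 192 + 110592 - (c + 1) ^ 3) % 192 = S % 192 := by
    have : (c + 1) ^ 3 ≤ 48 ^ 3 := Nat.pow_le_pow_left (by omega) 3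
    omega
  simp only [hs] at h
  have h6 : 6 ∣ S := by omega
  obtain ⟨m, rfl⟩ := h6
  refine ⟨c + 1, m, by omega, by omega, hS, ?_⟩
  have key : m % 4 = 2 ∨ m % 8 = 1 ∨ m % 8 = 3 ∨ m % 16 = 8 ∨ m % 32 = 4 ∨ m % 32 = 12 := by
    omega
  have h4 : m % 4 = 0 → m = 4 * (m / 4) := by omega
  rcases key with h | h | h | h | h | h
  · exact isThreeSq_of_two_mod_four h
  · exact isThreeSq_of_odd (.inl ⟨h, rfl⟩)
  · exact isThreeSq_of_odd (.inr ⟨h, rfl⟩)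
  · rw [h4 (by omega)]
    exact (isThreeSq_of_two_mod_four (by omega)).four_mul
  · rw [h4 (by omega)]
    exact (isThreeSq_of_odd (.inl ⟨by omega, rfl⟩)).four_mul
  · rw [h4 (by omega)]
    exact (isThreeSq_of_odd (.inr ⟨by omega, rfl⟩)).four_mul

lemma IsSumCubes.cons {k n x : ℕ} (hx : 0 < x) (h : IsSumCubes k n) :
    IsSumCubes (k + 1) (x ^ 3 + n) := by
  obtain ⟨a, ha, rfl⟩ := h
  refine ⟨Fin.cons x a, fun i => ?_, by simp [Fin.sum_univ_succ]⟩
  induction i using Fin.cases <;> simp [hx, ha]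

lemma IsSumCubes.pair {k n x a : ℕ} (hx : x < a) (h : IsSumCubes k n) :
    IsSumCubes (k + 2) (2 * a ^ 3 + 6 * a * x ^ 2 + n) := by
  obtain ⟨d, rfl⟩ := Nat.exists_eq_add_of_lt hx
  have := (h.cons (x := d + 1) (by omega)).cons (x := 2 * x + d + 1) (by omega)
  convert this using 1
  ring

lemma isSumCubes_six {a m : ℕ} (hm : m < a ^ 2) (h : IsThreeSq m) :
    IsSumCubes 6 (6 * a ^ 3 + 6 * a * m) := by
  obtain ⟨x, y, z, rfl⟩ := h
  have h0 : IsSumCubes 0 0 := ⟨fun _ => 1, fun i => i.elim0, by simp⟩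
  have hx : x < a := lt_of_pow_lt_pow_left' 2 (by omega)
  have hy : y < a := lt_of_pow_lt_pow_left' 2 (by omega)
  have hz : z < a := lt_of_pow_lt_pow_left' 2 (by omega)
  have := ((h0.pair hx).pair hy).pair hz
  convert this using 1
  ring

/-- The size adjustment: of the two largest `A` with `A ^ 3 ≤ N - 8 * a ^ 3`, one has
`5 ∤ N - A ^ 3`, since cubing is injective modulo `5`. -/
lemma exists_first_cube {N a : ℕ} (ha : 150000 ≤ a) (hN1 : 16 * a ^ 3 ≤ N)
    (hN2 : N < 16 * 5 ^ 9 * a ^ 3) :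
    ∃ A n, 0 < A ∧ N = A ^ 3 + n ∧ 8 * a ^ 3 ≤ n ∧ n < 12 * a ^ 3 ∧ ¬ 5 ∣ n := by
  obtain ⟨T, hT⟩ : ∃ T, N = T + 8 * a ^ 3 := ⟨N - 8 * a ^ 3, by omega⟩
  have ha3 : 150000 * a ^ 2 ≤ a ^ 3 := by
    rw [pow_succ a 2, mul_comm]
    exact Nat.mul_le_mul_left _ ha
  have hT8 : 2 ^ 3 ≤ T := by
    have : 1 ≤ a ^ 2 := Nat.one_le_pow _ _ (by omega)
    omega
  obtain ⟨A, hA1, hA2⟩ : ∃ A, A ^ 3 ≤ T ∧ T < (A + 1) ^ 3 := by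
    refine ⟨Nat.findGreatest (fun x => x ^ 3 ≤ T) T, ?_, ?_⟩
    · exact Nat.findGreatest_spec (P := fun x => x ^ 3 ≤ T) (m := 0) (by omega) (by simp)
    · by_contra! hle
      have h1 : Nat.findGreatest (fun x => x ^ 3 ≤ T) T + 1 ≤ T :=
        (Nat.le_self_pow (by norm_num) _).trans hle
      have h2 := Nat.le_findGreatest (P := fun x => x ^ 3 ≤ T) h1 hle
      omega
  have hAge : 2 ≤ A := by
    have : 2 < A + 1 := lt_of_pow_lt_pow_left' 3 (hT8.trans_lt hA2)
    omega
  have hAlt : A < 315 * a := by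
    -- `16 * 5 ^ 9 < 315 ^ 3`
    refine lt_of_pow_lt_pow_left' 3 ?_
    have : (315 * a) ^ 3 = 31255875 * a ^ 3 := by ring
    omega
  obtain ⟨D, rfl⟩ : ∃ D, A = D + 1 := ⟨A - 1, by omega⟩
  have hsq : (D + 1) ^ 2 ≤ 99225 * a ^ 2 := by
    have := Nat.pow_le_pow_left hAlt.le 2
    have h2 : (315 * a) ^ 2 = 99225 * a ^ 2 := by ring
    omega
  have ha2 : 1 ≤ a ^ 2 := Nat.one_le_pow _ _ (by omega)
  have e1 : (D + 1 + 1) ^ 3 = D ^ 3 + 6 * (D + 1) ^ 2 + 2 := by ring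
  have e2 : D ^ 3 ≤ (D + 1) ^ 3 := Nat.pow_le_pow_left (by omega) 3
  by_cases h5 : 5 ∣ N - D ^ 3
  · refine ⟨D + 1, N - (D + 1) ^ 3, by omega, by omega, by omega, by omega, fun h5' => ?_⟩
    have h : 5 ∣ (D + 1) ^ 3 - D ^ 3 := by
      have := Nat.dvd_sub h5 h5'
      rwa [show N - D ^ 3 - (N - (D + 1) ^ 3) = (D + 1) ^ 3 - D ^ 3 by omega] at this
    have h' : (D + 1) ^ 3 - D ^ 3 = 3 * (D * D) + 3 * D + 1 := by
      have : (D + 1) ^ 3 = D ^ 3 + (3 * (D * D) + 3 * D + 1) := by ring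
      omega
    rw [h'] at h
    have h2 := Nat.mul_mod D D 5
    have h3 : D % 5 = 0 ∨ D % 5 = 1 ∨ D % 5 = 2 ∨ D % 5 = 3 ∨ D % 5 = 4 := by omega
    rcases h3 with h3 | h3 | h3 | h3 | h3 <;> rw [h3] at h2 <;> omega
  · exact ⟨D, N - D ^ 3, by omega, by omega, by omega, by omega, h5⟩

theorem isSumCubes_nine {N : ℕ} (hN : 16 * (5 ^ 9) ^ 3 ≤ N) : IsSumCubes 9 N := by
  obtain ⟨w, hw, hN1, hN2⟩ :
      ∃ w, 3 ≤ w ∧ 16 * (5 ^ 9) ^ w ≤ N ∧ N < 16 * (5 ^ 9) ^ (w + 1) := by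
    have hne : N / 16 ≠ 0 := by omega
    refine ⟨Nat.log (5 ^ 9) (N / 16), ?_, ?_, ?_⟩
    · exact Nat.le_log_of_pow_le (by norm_num) (by omega)
    · have := Nat.pow_log_le_self (5 ^ 9) hne
      omega
    · have := Nat.lt_pow_succ_log_self (b := 5 ^ 9) (by norm_num) (N / 16)
      omega
  obtain ⟨t, ht⟩ : ∃ t, t = 5 ^ w := ⟨_, rfl⟩
  obtain ⟨a, ha⟩ : ∃ a, a = 5 ^ (3 * w) := ⟨_, rfl⟩
  have hta : a = t ^ 3 := by rw [ha, ht, ← pow_mul, mul_comm]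
  have ha9 : (5 ^ 9) ^ w = a ^ 3 := by rw [ha, ← pow_mul, ← pow_mul]; congr 1; ring
  have ha_ge : 5 ^ 9 ≤ a := ha ▸ Nat.pow_le_pow_right (by norm_num) (by omega)
  rw [pow_succ, ha9] at hN2
  rw [ha9] at hN1
  obtain ⟨A, n, hA, rfl, hn1, hn2, hn5⟩ :=
    exists_first_cube (N := N) (a := a) (by omega) hN1 (by linarith)
  obtain ⟨B, hB, hBa, hBn⟩ := exists_cube_modEq (j := 3 * w) (by omega) hn5
  rw [← ha] at hBa hBn
  have hB3 : B ^ 3 ≤ a ^ 3 := Nat.pow_le_pow_left hBa.le 3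
  obtain ⟨M, hM⟩ := (Nat.modEq_iff_dvd' (by omega)).1 hBn
  have hn : n = B ^ 3 + a * M := by omega
  have hapos : 0 < a := by omega
  have hM7 : 7 * a ^ 2 ≤ M := by
    refine le_of_mul_le_mul_left (a := a) ?_ hapos
    have : a * (7 * a ^ 2) = 7 * a ^ 3 := by ring
    omega
  have ha48 : 48 ^ 3 ≤ a ^ 2 := by nlinarith
  obtain ⟨c, m, hc, -, hR, hm⟩ := exists_sub_cube (M - 6 * a ^ 2) (by omega)
  have hMc : M = 6 * a ^ 2 + c ^ 3 + 6 * m := by omega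
  have haM : a * M = 6 * a ^ 3 + (t * c) ^ 3 + 6 * (a * m) := by
    rw [hMc, mul_pow, ← hta]; ring
  have hma : m < a ^ 2 := by
    refine Nat.lt_of_mul_lt_mul_left (a := a) ?_
    have : a * a ^ 2 = a ^ 3 := by ring
    omega
  have htc : 0 < t * c := Nat.mul_pos (ht ▸ by positivity) hc
  have := (((isSumCubes_six hma hm).cons htc).cons hB).cons hA
  convert this using 1
  rw [hn, haM]
  ring

theorem sums_of_k_cubes_cofinite (k : ℕ) (hk : 9 ≤ k) :
    {n : ℕ | 0 < n ∧
      ¬ ∃ a : Fin k → ℕ, (∀ i, 0 < a i) ∧ n = ∑ i, (a i) ^ 3}.Finite := by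
  have main : ∀ j n, 16 * (5 ^ 9) ^ 3 + j ≤ n → IsSumCubes (9 + j) n := by
    intro j
    induction j with
    | zero => exact fun n hn => isSumCubes_nine (by omega)
    | succ j ih =>
      intro n hn
      have := (ih (n - 1) (by omega)).cons (x := 1) one_pos
      rwa [show 1 ^ 3 + (n - 1) = n by omega] at this
  obtain ⟨j, rfl⟩ := Nat.exists_eq_add_of_le hk
  refine (Set.finite_lt_nat (16 * (5 ^ 9) ^ 3 + j)).subset fun n hn => ?_
  by_contra hlt
  exact hn.2 (main j n (not_lt.1 hlt))
end

section
/- If g : ℕ → ℂ is a multiplicative function satisfying g(a³ + b³) = g(a)³ + g(b)³ for all positive integers a, b, then g(n) = n for every positive integer n such that it is not the case that 3 divides n and 9 does not divide n, and moreover g(3)³ = 27 (so g(3) is one of 3, 3(−1+√−3)/2, or 3(−1−√−3)/2). -/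
/-!
The proof is a strong induction on `n` for the pair of claims `g n = n` (unless `3` divides `n`
exactly once) and `g n ^ 3 = n ^ 3`.

The engine is that `N = b ^ 2 + b * d + d ^ 2` divides two sums of cubes:
`(b + d) ^ 3 + b ^ 3 = (2 * b + d) * N` and `(b + d) ^ 3 + d ^ 3 = (b + 2 * d) * N`.
For coprime `b`, `d` with `3 ∤ 2 * b + d` both factorizations are coprime, so eliminating `g N`
(`exchange_of_not_dvd`) gives
`g (2b + d) * (g (b + d) ^ 3 + g d ^ 3) = g (b + 2d) * (g (b + d) ^ 3 + g b ^ 3)`.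
When `d < b`, every argument other than `2 * b + d` is smaller than it, so the value
`g (2 * b + d)` is forced by induction. If `3 ∣ 2 * b + d`, the same works after moving one factor
`3` from `N` to the linear factor (`exchange_of_dvd`), which determines `g (3 * (2 * b + d))`.
Choosing `d = 1` for odd targets and `d = 2` for multiples of `4` reaches every `n` that is not
obviously a product of smaller coprime factors, apart from a few small values.

The small values `g 3 ^ 3 = 27` and `g 4 = 4` come from a polynomial system in
`g 3 ^ 3, g 4, g 5, g 7, g 13` obtained from sums of two cubes of integers at most `6`
(`base_values`).
-/

/-- The polynomial system satisfied by `t = g 3 ^ 3`, `x = g 4`, `y = g 5`, `z = g 7`, `w = g 13`,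
`e = g 8` forces `t = 27` and `x = 4`. -/
lemma solve_system (t x y z w e : ℂ) (h28 : x * z = 1 + t) (h35 : y * z = 8 + t)
    (h65 : y * w = 1 + x ^ 3) (h91 : z * w = t + x ^ 3) (h126 : 18 * z = 1 + y ^ 3)
    (h189 : t * z = x ^ 3 + y ^ 3) (h72 : 9 * e = 8 + x ^ 3)
    (h280 : e * (y * z) = x ^ 3 + 8 * t) : t = 27 ∧ x = 4 := by
  have hfac : (t - 1) * (x ^ 3 - 64) = 0 := by
    linear_combination 9 * h280 - 9 * e * h35 - (8 + t) * h72
  rcases mul_eq_zero.mp hfac with h | h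
  · exfalso
    have ht : t = 1 := by linear_combination h
    subst ht
    have hz : z ≠ 0 := by
      rintro rfl
      norm_num at h28
    have hy : y = 9 / 2 * x := by
      apply mul_right_cancel₀ hz
      linear_combination h35 - 9 / 2 * h28
    subst hy
    -- Multiplying the equations for `189` and `126` by `x` and using `x * z = 2`.
    have h4 : x ^ 4 = 16 / 737 := by
      linear_combination -8 / 737 * x * h189 + 8 / 737 * h28
    have hx : x = 36 - 1458 / 737 := by
      linear_combination -x * h126 + 18 * h28 - 729 / 8 * h4
    rw [hx] at h4
    norm_num at h4
  · have hx : x ^ 3 = 64 := by linear_combination h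
    rw [hx] at h65 h91 h189
    have hz : (t - 18) * z = 63 := by linear_combination h189 - h126
    have hx1 : (t - 18) * (t + 1) = 63 * x := by
      linear_combination x * hz - (t - 18) * h28
    have p1 : ((t - 18) * (t + 1)) ^ 3 - 252 ^ 3 = 0 := by
      rw [hx1]
      linear_combination 63 ^ 3 * hx
    have p2 : (8 + t) * (t + 64) * (t - 18) ^ 2 - 65 * 3969 = 0 := by
      have e1 : (8 + t) * (t + 64) = 65 * z ^ 2 := by
        linear_combination -(t + 64) * h35 - y * z * h91 + z ^ 2 * h65
      have e2 : ((t - 18) * z) ^ 2 = 3969 := by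
        rw [hz]
        norm_num
      linear_combination (t - 18) ^ 2 * e1 + 65 * e2
    -- Bézout: the polynomials of `p1` and `p2` have greatest common divisor `t - 27`.
    have ht : t = 27 := by
      linear_combination
        (154585 / 82727549856 + (-1233149 / 13774137051024) * t
          + (-50453 / 27548274102048) * t ^ 2) * p1
        + (-12119 / 382997916 + (685255 / 255076612056) * t + (10793911 / 13774137051024) * t ^ 2
          + (-1923113 / 27548274102048) * t ^ 3 + (50453 / 27548274102048) * t ^ 4) * p2
    refine ⟨ht, ?_⟩
    rw [ht] at hx1
    linear_combination -1 / 63 * hx1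

/-- If a prime divides both `2 * b + d` and `b ^ 2 + b * d + d ^ 2` with `b`, `d` coprime, then it
is `3`, because the second number is `3 * b ^ 2` modulo the first. -/
lemma prime_eq_three {b d p : ℕ} (hbd : Nat.Coprime b d) (hp : p.Prime) (h1 : p ∣ 2 * b + d)
    (h2 : p ∣ b ^ 2 + b * d + d ^ 2) : p = 3 := by
  by_contra hp3
  have h3 : p ∣ 3 * b ^ 2 := by
    have e : b ^ 2 + b * d + d ^ 2 + b * (2 * b + d) = 3 * b ^ 2 + (2 * b + d) * d := by ring
    have h : p ∣ 3 * b ^ 2 + (2 * b + d) * d := e ▸ dvd_add h2 (h1.mul_left b)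
    exact (Nat.dvd_add_left (h1.mul_right d)).mp h
  have hb : p ∣ b := by
    rcases hp.dvd_mul.mp h3 with h | h
    · exact absurd ((Nat.prime_dvd_prime_iff_eq hp Nat.prime_three).mp h) hp3
    · exact hp.dvd_of_dvd_pow h
  have hd : p ∣ d := (Nat.dvd_add_right (hb.mul_left 2)).mp h1
  exact hp.one_lt.ne' (Nat.dvd_one.mp (hbd ▸ Nat.dvd_gcd hb hd))

lemma coprime_of_not_dvd {b d : ℕ} (hbd : Nat.Coprime b d) (h3 : ¬ 3 ∣ 2 * b + d) :
    Nat.Coprime (2 * b + d) (b ^ 2 + b * d + d ^ 2) := by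
  refine Nat.coprime_of_dvd fun p hp h1 h2 => h3 ?_
  rwa [prime_eq_three hbd hp h1 h2] at h1

lemma coprime_of_dvd {b d N : ℕ} (hbd : Nat.Coprime b d) (h3 : 3 ∣ 2 * b + d)
    (hN : b ^ 2 + b * d + d ^ 2 = 3 * N) : Nat.Coprime (3 * (2 * b + d)) N := by
  refine Nat.coprime_of_dvd fun p hp h1 h2 => ?_
  have h1' : p ∣ 2 * b + d := by
    rcases hp.dvd_mul.mp h1 with h | h
    · exact h.trans h3
    · exact h
  have hp3 : p = 3 := prime_eq_three hbd hp h1' (hN ▸ h2.mul_left 3)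
  subst hp3
  obtain ⟨u, hu⟩ := h3
  obtain ⟨v, rfl⟩ := h2
  -- `4 * (b² + bd + d²) = (2b + d)² + 3d²`, so `9` divides `3 * d ^ 2`.
  have hd2 : d ^ 2 + 3 * u ^ 2 = 12 * v := by
    have e : 4 * (b ^ 2 + b * d + d ^ 2) = (2 * b + d) ^ 2 + 3 * d ^ 2 := by ring
    rw [hN, hu] at e
    nlinarith
  have hd : 3 ∣ d := Nat.prime_three.dvd_of_dvd_pow (n := 2) (by omega)
  have hb : 3 ∣ b := by omega
  have := hbd ▸ Nat.dvd_gcd hb hd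
  omega

lemma exchange_of_not_dvd (g : ℕ → ℂ)
    (hmul : ∀ m n : ℕ, 0 < m → 0 < n → Nat.Coprime m n → g (m * n) = g m * g n)
    (hadd : ∀ a b : ℕ, 0 < a → 0 < b → g (a ^ 3 + b ^ 3) = g a ^ 3 + g b ^ 3)
    {b d : ℕ} (hb : 0 < b) (hd : 0 < d) (hbd : Nat.Coprime b d) (h3 : ¬ 3 ∣ 2 * b + d) :
    g (2 * b + d) * (g (b + d) ^ 3 + g d ^ 3) = g (b + 2 * d) * (g (b + d) ^ 3 + g b ^ 3) := by
  have key : ∀ b d : ℕ, 0 < b → 0 < d → Nat.Coprime b d → ¬ 3 ∣ 2 * b + d →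
      g (2 * b + d) * g (b ^ 2 + b * d + d ^ 2) = g (b + d) ^ 3 + g b ^ 3 := by
    intro b d hb hd hbd h3
    rw [← hadd _ _ (by omega) hb, ← hmul _ _ (by omega) (by positivity) (coprime_of_not_dvd hbd h3)]
    congr 1
    ring
  have k1 := key b d hb hd hbd h3
  have k2 := key d b hd hb hbd.symm (by omega)
  rw [show 2 * d + b = b + 2 * d by ring, show d ^ 2 + d * b + b ^ 2 = b ^ 2 + b * d + d ^ 2 by ring,
    add_comm d b] at k2
  rw [← k1, ← k2]
  ring

lemma exchange_of_dvd (g : ℕ → ℂ)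
    (hmul : ∀ m n : ℕ, 0 < m → 0 < n → Nat.Coprime m n → g (m * n) = g m * g n)
    (hadd : ∀ a b : ℕ, 0 < a → 0 < b → g (a ^ 3 + b ^ 3) = g a ^ 3 + g b ^ 3)
    {b d : ℕ} (hb : 0 < b) (hd : 0 < d) (hbd : Nat.Coprime b d) (h3 : 3 ∣ 2 * b + d) :
    g (3 * (2 * b + d)) * (g (b + d) ^ 3 + g d ^ 3)
      = g (3 * (b + 2 * d)) * (g (b + d) ^ 3 + g b ^ 3) := by
  obtain ⟨N, hN⟩ : 3 ∣ b ^ 2 + b * d + d ^ 2 := by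
    obtain ⟨u, hu⟩ := h3
    have e : b ^ 2 + b * d + d ^ 2 + b * (2 * b + d) = 3 * b ^ 2 + (2 * b + d) * d := by ring
    rw [hu] at e
    have h : 3 ∣ b ^ 2 + b * d + d ^ 2 + b * (3 * u) := ⟨b ^ 2 + u * d, by rw [e]; ring⟩
    exact (Nat.dvd_add_left ⟨b * u, by ring⟩).mp h
  have key : ∀ b d : ℕ, 0 < b → 0 < d → Nat.Coprime b d → 3 ∣ 2 * b + d →
      b ^ 2 + b * d + d ^ 2 = 3 * N →
      g (3 * (2 * b + d)) * g N = g (b + d) ^ 3 + g b ^ 3 := by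
    intro b d hb hd hbd h3 hN
    have hNpos : 0 < N := by
      have : 0 < b ^ 2 := by positivity
      omega
    rw [← hadd _ _ (by omega) hb, ← hmul _ _ (by omega) hNpos (coprime_of_dvd hbd h3 hN)]
    congr 1
    calc 3 * (2 * b + d) * N = (2 * b + d) * (3 * N) := by ring
      _ = (b + d) ^ 3 + b ^ 3 := by rw [← hN]; ring
  have k1 := key b d hb hd hbd h3 hN
  have k2 := key d b hd hb hbd.symm (by omega) (by rw [← hN]; ring)
  rw [show 2 * d + b = b + 2 * d by ring, add_comm d b] at k2
  rw [← k1, ← k2]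
  ring

lemma base_values (g : ℕ → ℂ) (hg1 : g 1 = 1)
    (hmul : ∀ m n : ℕ, 0 < m → 0 < n → Nat.Coprime m n → g (m * n) = g m * g n)
    (hadd : ∀ a b : ℕ, 0 < a → 0 < b → g (a ^ 3 + b ^ 3) = g a ^ 3 + g b ^ 3) :
    g 2 = 2 ∧ g 9 = 9 ∧ g 3 ^ 3 = 27 ∧ g 4 = 4 := by
  have m (a b : ℕ) (ha : 0 < a := by norm_num) (hb : 0 < b := by norm_num)
    (h : Nat.Coprime a b := by norm_num) := hmul a b ha hb h
  have s (a b : ℕ) (ha : 0 < a := by norm_num) (hb : 0 < b := by norm_num) := hadd a b ha hb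
  have g2 : g 2 = 2 := by
    have := s 1 1
    norm_num [hg1] at this
    exact this
  have g9 : g 9 = 9 := by
    have := s 1 2
    norm_num [hg1, g2] at this
    exact this
  have g6 : g 6 = 2 * g 3 := by
    have := m 2 3
    norm_num [g2] at this
    exact this
  have g27 : g 27 = g 3 ^ 3 := by
    have h1 := s 3 3
    have h2 := m 2 27
    norm_num [g2] at h1 h2
    linear_combination 1 / 2 * h1 - 1 / 2 * h2
  have h28 : g 4 * g 7 = 1 + g 3 ^ 3 := by
    rw [← m 4 7]; simpa [hg1] using s 1 3
  have h35 : g 5 * g 7 = 8 + g 3 ^ 3 := by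
    rw [← m 5 7]; have := s 2 3; norm_num [g2] at this ⊢; exact this
  have h65 : g 5 * g 13 = 1 + g 4 ^ 3 := by
    rw [← m 5 13]; simpa [hg1] using s 1 4
  have h91 : g 7 * g 13 = g 3 ^ 3 + g 4 ^ 3 := by
    rw [← m 7 13]; simpa using s 3 4
  have h126 : 18 * g 7 = 1 + g 5 ^ 3 := by
    have h1 := s 1 5
    have h2 := m 18 7
    have h3 := m 2 9
    norm_num [hg1, g2, g9] at h1 h2 h3
    rw [← h1, h2, h3]
  have h189 : g 3 ^ 3 * g 7 = g 4 ^ 3 + g 5 ^ 3 := by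
    rw [← g27, ← m 27 7]; simpa using s 4 5
  have h72 : 9 * g 8 = 8 + g 4 ^ 3 := by
    have h1 := s 2 4
    have h2 := m 9 8
    norm_num [g2, g9] at h1 h2
    rw [← h1, h2]
  have h280 : g 8 * (g 5 * g 7) = g 4 ^ 3 + 8 * g 3 ^ 3 := by
    rw [← m 5 7, ← m 8 (5 * 7)]
    have := s 4 6
    norm_num [g6] at this ⊢
    rw [this]; ring
  obtain ⟨h3, h4⟩ := solve_system _ _ _ _ _ _ h28 h35 h65 h91 h126 h189 h72 h280
  exact ⟨g2, g9, h3, h4⟩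

/-- Cancellation step: once the other values in an exchange identity (scaled by `c = 1` or `3`)
are the expected ones, so is the remaining one. -/
lemma value_of_exchange {b d c : ℕ} (hb : 0 < b) {X Y A B D : ℂ}
    (h : X * (A + D) = Y * (A + B)) (hY : Y = (c * (b + 2 * d) : ℕ))
    (hA : A = ((b + d : ℕ) : ℂ) ^ 3) (hB : B = (b : ℂ) ^ 3) (hD : D = (d : ℂ) ^ 3) :
    X = (c * (2 * b + d) : ℕ) := by
  have hne : A + D ≠ 0 := by
    rw [hA, hD]
    have : (b + d) ^ 3 + d ^ 3 ≠ 0 := by positivity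
    exact_mod_cast this
  apply mul_right_cancel₀ hne
  rw [h, hY, hA, hB, hD]
  push_cast
  ring

theorem cubes_commute_two (g : ℕ → ℂ)
    (hg1 : g 1 = 1)
    (hmul : ∀ m n : ℕ, 0 < m → 0 < n → Nat.Coprime m n → g (m * n) = g m * g n)
    (hadd : ∀ a b : ℕ, 0 < a → 0 < b →
      g (a ^ 3 + b ^ 3) = g a ^ 3 + g b ^ 3) :
    (∀ n : ℕ, 0 < n → ¬(3 ∣ n ∧ ¬ 9 ∣ n) → g n = n) ∧ g 3 ^ 3 = 27 := by
  obtain ⟨g2, g9, g3, g4⟩ := base_values g hg1 hmul hadd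
  refine ⟨?_, g3⟩
  suffices H : ∀ n : ℕ, 0 < n →
      (¬(3 ∣ n ∧ ¬ 9 ∣ n) → g n = n) ∧ g n ^ 3 = (n : ℂ) ^ 3 from fun n hn => (H n hn).1
  intro n
  induction n using Nat.strong_induction_on with
  | _ n ih =>
  intro hn
  by_cases h39 : 3 ∣ n ∧ ¬ 9 ∣ n
  · refine ⟨fun h => absurd h39 h, ?_⟩
    obtain ⟨⟨m, rfl⟩, h9⟩ := h39
    have hm : ¬ 3 ∣ m := by omega
    rw [hmul 3 m (by norm_num) (by omega) ((Nat.Prime.coprime_iff_not_dvd Nat.prime_three).mpr hm),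
      mul_pow, g3, (ih m (by omega) (by omega)).2]
    push_cast
    ring
  suffices hgn : g n = n from ⟨fun _ => hgn, by rw [hgn]⟩
  -- The two ways in which induction determines `g n`.
  have stepA : ∀ b d : ℕ, 0 < d → d < b → Nat.Coprime b d → n = 2 * b + d → ¬ 3 ∣ n →
      g n = n := by
    rintro b d hd hdb hbd rfl h3
    have := value_of_exchange (c := 1) (b := b) (d := d) (by omega)
      (exchange_of_not_dvd g hmul hadd (by omega) hd hbd h3)
      (by rw [one_mul]; exact (ih (b + 2 * d) (by omega) (by omega)).1 (by omega))
      (ih (b + d) (by omega) (by omega)).2 (ih b (by omega) (by omega)).2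
      (ih d (by omega) hd).2
    rwa [one_mul] at this
  have stepB : ∀ b d : ℕ, 0 < d → d < b → Nat.Coprime b d → n = 3 * (2 * b + d) →
      3 ∣ 2 * b + d → g n = n := by
    rintro b d hd hdb hbd rfl h3
    exact value_of_exchange (c := 3) (b := b) (d := d) (by omega)
      (exchange_of_dvd g hmul hadd (by omega) hd hbd h3)
      ((ih (3 * (b + 2 * d)) (by omega) (by omega)).1 (by omega))
      (ih (b + d) (by omega) (by omega)).2 (ih b (by omega) (by omega)).2
      (ih d (by omega) hd).2
  have cop2 : ∀ k : ℕ, 0 < k → Nat.Coprime (2 * k - 1) 2 := by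
    intro k hk
    rw [Nat.coprime_two_right]
    exact ⟨k - 1, by omega⟩
  by_cases hmod2 : n % 4 = 2
  · obtain ⟨m, rfl⟩ : 2 ∣ n := by omega
    have hm : ¬ 2 ∣ m := by omega
    rw [hmul 2 m (by norm_num) (by omega) ((Nat.Prime.coprime_iff_not_dvd Nat.prime_two).mpr hm),
      g2, (ih m (by omega) (by omega)).1 (by omega)]
    push_cast
    ring
  by_cases h3 : 3 ∣ n
  · obtain ⟨v, hv⟩ : 9 ∣ n := by
      by_contra h
      exact h39 ⟨h3, h⟩
    by_cases hv1 : v = 1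
    · subst hv1
      rw [hv, mul_one, g9]
      norm_num
    by_cases hodd : n % 2 = 1
    · exact stepB ((n / 3 - 1) / 2) 1 one_pos (by omega) (Nat.coprime_one_right _) (by omega)
        (by omega)
    · exact stepB (2 * (n / 12) - 1) 2 two_pos (by omega) (cop2 _ (by omega)) (by omega) (by omega)
  · by_cases h1 : n = 1
    · rw [h1, hg1, Nat.cast_one]
    by_cases h4 : n = 4
    · rw [h4, g4]
      norm_num
    by_cases hodd : n % 2 = 1
    · exact stepA ((n - 1) / 2) 1 one_pos (by omega) (Nat.coprime_one_right _) (by omega) h3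
    · exact stepA (2 * (n / 4) - 1) 2 two_pos (by omega) (cop2 _ (by omega)) (by omega) h3
end

section
/- For every complex number c with c³ = 27, there exists a multiplicative function g : ℕ → ℂ such that g(a³ + b³) = g(a)³ + g(b)³ for all positive integers a, b, with g(3) = c, and g(n) = n for every positive integer n such that it is not the case that 3 divides n and 9 does not divide n. In particular, there exist three different multiplicative functions satisfying this commuting condition for k = 2. -/
/-!
Take `g n = (n / 3) * c` when `3 ∣ n` and `9 ∤ n`, and
`g n = n` otherwise. Since `c ^ 3 = 27`, always `g n ^ 3 = n ^ 3`. Cubes are `0, 1, -1` modulo `9`,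
so a sum of two cubes divisible by `3` is divisible by `9`; hence
`g (a ^ 3 + b ^ 3) = a ^ 3 + b ^ 3 = g a ^ 3 + g b ^ 3`. Multiplicativity holds because `g n / n`
depends only on the `3`-adic valuation of `n`, and at most one of two coprime numbers is divisible
by `3`.
-/

theorem nine_dvd_sum_cubes_of_three_dvd (a b : ℕ) (h : 3 ∣ a ^ 3 + b ^ 3) :
    9 ∣ a ^ 3 + b ^ 3 := by
  have cube_mod : ∀ x : ℕ, x ^ 3 % 9 = 0 ∨ x ^ 3 % 9 = 1 ∨ x ^ 3 % 9 = 8 := by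
    intro x
    have hx : x % 9 < 9 := Nat.mod_lt _ (by norm_num)
    rw [Nat.pow_mod]
    interval_cases x % 9 <;> simp
  have ha := cube_mod a
  have hb := cube_mod b
  omega

theorem three_exactly_dvd_mul_iff {m n : ℕ} (hn : ¬ 3 ∣ n) :
    (3 ∣ m * n ∧ ¬ 9 ∣ m * n) ↔ (3 ∣ m ∧ ¬ 9 ∣ m) := by
  have h3 : Nat.Coprime 3 n := (Nat.Prime.coprime_iff_not_dvd Nat.prime_three).2 hn
  have h9 : Nat.Coprime 9 n := Nat.Coprime.pow_left 2 h3
  rw [h3.dvd_mul_right, h9.dvd_mul_right]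

theorem cubes_commute_two_exists (c : ℂ) (hc : c ^ 3 = 27) :
    ∃ g : ℕ → ℂ,
      g 1 = 1 ∧
      (∀ m n : ℕ, 0 < m → 0 < n → Nat.Coprime m n → g (m * n) = g m * g n) ∧
      (∀ a b : ℕ, 0 < a → 0 < b →
        g (a ^ 3 + b ^ 3) = g a ^ 3 + g b ^ 3) ∧
      g 3 = c ∧
      (∀ n : ℕ, 0 < n → ¬(3 ∣ n ∧ ¬ 9 ∣ n) → g n = n) := by
  let g : ℕ → ℂ := fun n => if 3 ∣ n ∧ ¬ 9 ∣ n then (n : ℂ) / 3 * c else n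
  have g_pos : ∀ n, (3 ∣ n ∧ ¬ 9 ∣ n) → g n = (n : ℂ) / 3 * c := fun n h => if_pos h
  have g_neg : ∀ n, ¬ (3 ∣ n ∧ ¬ 9 ∣ n) → g n = n := fun n h => if_neg h
  have g_cube : ∀ n, g n ^ 3 = (n : ℂ) ^ 3 := by
    intro n
    by_cases h : 3 ∣ n ∧ ¬ 9 ∣ n
    · rw [g_pos n h, mul_pow, hc]
      ring
    · rw [g_neg n h]
  have g_mul : ∀ m n, ¬ 3 ∣ n → g (m * n) = g m * g n := by
    intro m n hn
    rw [g_neg n (fun h => hn h.1)]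
    by_cases h : 3 ∣ m ∧ ¬ 9 ∣ m
    · rw [g_pos m h, g_pos _ ((three_exactly_dvd_mul_iff hn).2 h)]
      push_cast
      ring
    · rw [g_neg m h, g_neg _ (fun h' => h ((three_exactly_dvd_mul_iff hn).1 h'))]
      push_cast
      ring
  refine ⟨g, ?_, ?_, ?_, ?_, fun n _ h => g_neg n h⟩
  · rw [g_neg 1 (by norm_num), Nat.cast_one]
  · intro m n _ _ hmn
    by_cases hn : 3 ∣ n
    · have hm : ¬ 3 ∣ m := fun hm => by
        have := Nat.dvd_gcd hm hn
        rw [hmn.gcd_eq_one] at this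
        omega
      rw [mul_comm m n, g_mul n m hm, mul_comm]
    · exact g_mul m n hn
  · intro a b _ _
    rw [g_cube, g_cube, g_neg _ (fun h => h.2 (nine_dvd_sum_cubes_of_three_dvd a b h.1))]
    push_cast
    rfl
  · rw [g_pos 3 (by norm_num)]
    norm_num
end

section
/- Let k ≥ 3 be a fixed integer. If g : ℕ → ℂ is a multiplicative function satisfying g(a₁³ + a₂³ + ⋯ + a_k³) = g(a₁)³ + g(a₂)³ + ⋯ + g(a_k)³ for all positive integers a₁, a₂, …, a_k, then g(n) = n for every positive integer n. -/
/-!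
Write `k = j + 3` and `f n = g n ^ 3`. Two equal sums of three cubes, both padded with the same
`j` cubes, show that `f a + f b + f c = f d + f e + f r` whenever
`a³ + b³ + c³ = d³ + e³ + r³`. The functions with this property form a space of dimension four
(`CubeRel.classify`), spanned by `1`, `n³` and two periodic functions: since a cube is congruent to
`0` or `±1` modulo `9` and modulo `7`, that residue (`chi` and `psi`) is additive over equal sums
of three cubes. The upper bound on the dimension comes from linear families of equal sums of three
cubes, such as `(3x+1)³ + 11³ + (2x-11)³ = 1³ + (2x+7)³ + (3x-7)³`, which express `f n` through
values at smaller arguments for all `n ≥ 60`, and from finitely many numerical relations.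

Hence `g n ^ 3 = A n³ + B + C χ(n) + D ψ(n)`, so that `g S = A S + E` at sums `S` of `k` cubes,
where `E` depends only on the residues of the summands modulo `21`. Cubing and letting `S` grow
with these residues fixed gives `A³ = A`, `A² E = 0` and `E³ = B + C χ(S) + D ψ(S)`; six choices of
the residues then force `A = 1` and `B = C = D = 0` (`cube_eq`). Thus `g S = S` whenever `S` is a
sum of `k` positive cubes.

It remains to pass to all `n` by multiplicativity. If `n` is coprime to `6`, there is an `M` coprime
to `n` such that `M` and `n M` are both sums of `k` positive cubes (`exists_multiple`), whence
`g n = n`. Powers of `2` and then of `3` are reached by sums of `k` cubes with a prescribed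
`2`-adic or `3`-adic valuation.
-/

namespace CubesCommute

/-! ### Functions additive over equal sums of three cubes -/

/-- The residue of `n³` modulo `9` of least absolute value. -/
def chi (n : ℕ) : ℤ := if n % 3 = 0 then 0 else if n % 3 = 1 then 1 else -1

/-- The residue of `n³` modulo `7` of least absolute value (the Legendre symbol modulo `7`). -/
def psi (n : ℕ) : ℤ :=
  if n % 7 = 0 then 0 else if n % 7 = 1 ∨ n % 7 = 2 ∨ n % 7 = 4 then 1 else -1

lemma chi_bound (n : ℕ) : -1 ≤ chi n ∧ chi n ≤ 1 := by
  unfold chi; split_ifs <;> simp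

lemma psi_bound (n : ℕ) : -1 ≤ psi n ∧ psi n ≤ 1 := by
  unfold psi; split_ifs <;> simp

lemma chi_spec (n : ℕ) : ∃ q : ℤ, (n : ℤ) ^ 3 = 9 * q + chi n := by
  obtain ⟨r, hr⟩ : ∃ r, r = n % 3 := ⟨_, rfl⟩
  have hn : n = 3 * (n / 3) + r := by omega
  have hlt : r < 3 := by omega
  generalize n / 3 = m at hn
  unfold chi
  rw [← hr, hn]
  interval_cases r
  · exact ⟨3 * m ^ 3, by norm_num; ring⟩
  · exact ⟨3 * m ^ 3 + 3 * m ^ 2 + m, by norm_num; ring⟩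
  · exact ⟨3 * m ^ 3 + 6 * m ^ 2 + 4 * m + 1, by norm_num; ring⟩

lemma psi_spec (n : ℕ) : ∃ q : ℤ, (n : ℤ) ^ 3 = 7 * q + psi n := by
  obtain ⟨r, hr⟩ : ∃ r, r = n % 7 := ⟨_, rfl⟩
  have hn : n = 7 * (n / 7) + r := by omega
  have hlt : r < 7 := by omega
  generalize n / 7 = m at hn
  suffices h : ∃ q : ℤ, (r : ℤ) ^ 3 = 7 * q + psi n by
    obtain ⟨q, hq⟩ := h
    refine ⟨q + 49 * m ^ 3 + 21 * m ^ 2 * r + 3 * m * r ^ 2, ?_⟩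
    have : (n : ℤ) = 7 * m + r := by exact_mod_cast hn
    rw [this]
    linear_combination hq
  unfold psi
  rw [← hr]
  interval_cases r
  · exact ⟨0, by simp⟩
  · exact ⟨0, by simp⟩
  · exact ⟨1, by simp⟩
  · exact ⟨4, by simp⟩
  · exact ⟨9, by simp⟩
  · exact ⟨18, by simp⟩
  · exact ⟨31, by simp⟩

/-- `h` has equal sums over any two triples of positive integers with equal sums of cubes. -/
def CubeRel (h : ℕ → ℂ) : Prop :=
  ∀ a b c d e r : ℕ, 0 < a → 0 < b → 0 < c → 0 < d → 0 < e → 0 < r →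
    a ^ 3 + b ^ 3 + c ^ 3 = d ^ 3 + e ^ 3 + r ^ 3 → h a + h b + h c = h d + h e + h r

/-- A sum of three of the values `0, ±1` is determined by its residue modulo `9`. -/
lemma cubeRel_chi : CubeRel fun n => (chi n : ℂ) := by
  intro a b c d e r _ _ _ _ _ _ h
  have hz : (a : ℤ) ^ 3 + b ^ 3 + c ^ 3 = d ^ 3 + e ^ 3 + r ^ 3 := by exact_mod_cast h
  obtain ⟨q1, h1⟩ := chi_spec a
  obtain ⟨q2, h2⟩ := chi_spec b
  obtain ⟨q3, h3⟩ := chi_spec c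
  obtain ⟨q4, h4⟩ := chi_spec d
  obtain ⟨q5, h5⟩ := chi_spec e
  obtain ⟨q6, h6⟩ := chi_spec r
  rw [h1, h2, h3, h4, h5, h6] at hz
  have b1 := chi_bound a
  have b2 := chi_bound b
  have b3 := chi_bound c
  have b4 := chi_bound d
  have b5 := chi_bound e
  have b6 := chi_bound r
  have : chi a + chi b + chi c = chi d + chi e + chi r := by omega
  beta_reduce
  exact_mod_cast this

/-- A sum of three of the values `0, ±1` is determined by its residue modulo `7`. -/
lemma cubeRel_psi : CubeRel fun n => (psi n : ℂ) := by
  intro a b c d e r _ _ _ _ _ _ h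
  have hz : (a : ℤ) ^ 3 + b ^ 3 + c ^ 3 = d ^ 3 + e ^ 3 + r ^ 3 := by exact_mod_cast h
  obtain ⟨q1, h1⟩ := psi_spec a
  obtain ⟨q2, h2⟩ := psi_spec b
  obtain ⟨q3, h3⟩ := psi_spec c
  obtain ⟨q4, h4⟩ := psi_spec d
  obtain ⟨q5, h5⟩ := psi_spec e
  obtain ⟨q6, h6⟩ := psi_spec r
  rw [h1, h2, h3, h4, h5, h6] at hz
  have b1 := psi_bound a
  have b2 := psi_bound b
  have b3 := psi_bound c
  have b4 := psi_bound d
  have b5 := psi_bound e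
  have b6 := psi_bound r
  have : psi a + psi b + psi c = psi d + psi e + psi r := by omega
  beta_reduce
  exact_mod_cast this

/-- The value at `n` vanishes if `n` is the largest entry of a relation and all smaller values
vanish. -/
lemma CubeRel.step {h : ℕ → ℂ} (hrel : CubeRel h) (n p q a b c : ℕ)
    (ih : ∀ m, 0 < m → m < n → h m = 0)
    (hpos : (0 < p ∧ p < n) ∧ (0 < q ∧ q < n) ∧ (0 < a ∧ a < n) ∧ (0 < b ∧ b < n) ∧
      (0 < c ∧ c < n))
    (heq : n ^ 3 + p ^ 3 + q ^ 3 = a ^ 3 + b ^ 3 + c ^ 3) : h n = 0 := by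
  obtain ⟨⟨p0, p1⟩, ⟨q0, q1⟩, ⟨a0, a1⟩, ⟨b0, b1⟩, ⟨c0, c1⟩⟩ := hpos
  have := hrel n p q a b c (by omega) p0 q0 a0 b0 c0 heq
  rw [ih p p0 p1, ih q q0 q1, ih a a0 a1, ih b b0 b1, ih c c0 c1] at this
  simpa using this

/-- The eleven relations between the arguments `1, …, 15` used here have rank eleven in the values
at `5, …, 15`. -/
lemma CubeRel.small {h : ℕ → ℂ} (hrel : CubeRel h) (h1 : h 1 = 0) (h2 : h 2 = 0) (h3 : h 3 = 0)
    (h4 : h 4 = 0) (n : ℕ) (hn : 0 < n) (hn' : n < 16) : h n = 0 := by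
  have e0 := hrel 1 5 5 2 3 6
    (by decide) (by decide) (by decide) (by decide) (by decide) (by decide) (by norm_num)
  have e1 := hrel 1 2 10 4 6 9
    (by decide) (by decide) (by decide) (by decide) (by decide) (by decide) (by norm_num)
  have e2 := hrel 2 3 11 5 8 9
    (by decide) (by decide) (by decide) (by decide) (by decide) (by decide) (by norm_num)
  have e3 := hrel 1 9 9 4 4 11
    (by decide) (by decide) (by decide) (by decide) (by decide) (by decide) (by norm_num)
  have e4 := hrel 1 1 12 1 9 10
    (by decide) (by decide) (by decide) (by decide) (by decide) (by decide) (by norm_num)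
  have e5 := hrel 2 3 12 6 6 11
    (by decide) (by decide) (by decide) (by decide) (by decide) (by decide) (by norm_num)
  have e6 := hrel 1 6 13 7 7 12
    (by decide) (by decide) (by decide) (by decide) (by decide) (by decide) (by norm_num)
  have e7 := hrel 2 10 12 3 8 13
    (by decide) (by decide) (by decide) (by decide) (by decide) (by decide) (by norm_num)
  have e8 := hrel 2 2 15 9 11 11
    (by decide) (by decide) (by decide) (by decide) (by decide) (by decide) (by norm_num)
  have e9 := hrel 1 6 15 4 11 13
    (by decide) (by decide) (by decide) (by decide) (by decide) (by decide) (by norm_num)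
  have e10 := hrel 2 6 15 7 8 14
    (by decide) (by decide) (by decide) (by decide) (by decide) (by decide) (by norm_num)
  simp only [h1, h2, h3, h4] at e0 e1 e2 e3 e4 e5 e6 e7 e8 e9 e10
  have z5 : h 5 = 0 := by
    linear_combination (1/2)*e0 + (1/2)*e1 + (1/2)*e3 + (1/2)*e4 - (1/2)*e5
  have z6 : h 6 = 0 := by
    linear_combination e1 + e3 + e4 - e5
  have z7 : h 7 = 0 := by
    linear_combination (1/4)*e0 + (7/4)*e1 + (1/2)*e2 + (7/4)*e3 + (5/4)*e4
      - (5/4)*e5 - (1/2)*e6 - (1/2)*e7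
  have z8 : h 8 = 0 := by
    linear_combination 3*e1 + 2*e3 + 2*e4 - e5 - e7 - e8 + e9
  have z9 : h 9 = 0 := by linear_combination e2 + e3 + z5 + z8
  have z10 : h 10 = 0 := by linear_combination e1 + z6 + z9
  have z11 : h 11 = 0 := by linear_combination e2 + z5 + z8 + z9
  have z12 : h 12 = 0 := by linear_combination e4 + z9 + z10
  have z13 : h 13 = 0 := by linear_combination e6 - z6 + 2 * z7 + z12
  have z15 : h 15 = 0 := by linear_combination e8 + z9 + 2 * z11
  have z14 : h 14 = 0 := by linear_combination -e10 + z6 + z15 - z7 - z8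
  interval_cases n <;> assumption

lemma CubeRel.eq_zero {h : ℕ → ℂ} (hrel : CubeRel h) (h1 : h 1 = 0) (h2 : h 2 = 0) (h3 : h 3 = 0)
    (h4 : h 4 = 0) (n : ℕ) (hn : 0 < n) : h n = 0 := by
  induction n using Nat.strong_induction_on with
  | _ n ih0 =>
  have ih : ∀ m, 0 < m → m < n → h m = 0 := fun m h0 hm => ih0 m hm h0
  clear ih0
  have step3 := hrel.step
  by_cases c16 : n < 16
  · exact hrel.small h1 h2 h3 h4 n hn c16
  -- One linear family of relations for each residue class modulo `3`.
  by_cases c1 : n % 3 = 1 ∧ 22 ≤ n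
  · obtain ⟨y, rfl⟩ : ∃ y, n = 3 * y + 22 := ⟨(n - 22) / 3, by omega⟩
    exact step3 _ 11 (2 * y + 3) 1 (2 * y + 21) (3 * y + 14) ih (by omega) (by ring)
  by_cases c2 : n % 3 = 2 ∧ 26 ≤ n
  · obtain ⟨y, rfl⟩ : ∃ y, n = 3 * y + 26 := ⟨(n - 26) / 3, by omega⟩
    exact step3 _ (y + 18) (2 * y + 9) (y + 8) (2 * y + 25) (3 * y + 20) ih (by omega) (by ring)
  by_cases c3 : n % 3 = 0 ∧ 60 ≤ n
  · obtain ⟨y, rfl⟩ : ∃ y, n = 3 * y + 60 := ⟨(n - 60) / 3, by omega⟩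
    exact step3 _ 33 (2 * y + 5) 3 (2 * y + 59) (3 * y + 36) ih (by omega) (by ring)
  have hcases : n = 16 ∨ n = 17 ∨ n = 18 ∨ n = 19 ∨ n = 20 ∨ n = 21 ∨ n = 23 ∨ n = 24 ∨ n = 27 ∨
      n = 30 ∨ n = 33 ∨ n = 36 ∨ n = 39 ∨ n = 42 ∨ n = 45 ∨ n = 48 ∨ n = 51 ∨ n = 54 ∨ n = 57 := by
    omega
  clear c16 c1 c2 c3
  rcases hcases with rfl | rfl | rfl | rfl | rfl | rfl | rfl | rfl | rfl | rfl | rfl | rfl | rfl |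
    rfl | rfl | rfl | rfl | rfl | rfl
  · exact step3 16 1 2 1 9 15 ih (by decide) (by norm_num)
  · exact step3 17 1 2 6 11 15 ih (by decide) (by norm_num)
  · exact step3 18 2 7 4 14 15 ih (by decide) (by norm_num)
  · exact step3 19 2 2 5 15 15 ih (by decide) (by norm_num)
  · exact step3 20 1 6 3 11 19 ih (by decide) (by norm_num)
  · exact step3 21 1 17 7 18 20 ih (by decide) (by norm_num)
  · exact step3 23 1 2 8 18 18 ih (by decide) (by norm_num)
  · exact step3 24 1 2 1 18 20 ih (by decide) (by norm_num)
  · exact step3 27 1 4 3 16 25 ih (by decide) (by norm_num)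
  · exact step3 30 1 1 9 22 25 ih (by decide) (by norm_num)
  · exact step3 33 1 2 16 23 27 ih (by decide) (by norm_num)
  · exact step3 36 1 3 1 27 30 ih (by decide) (by norm_num)
  · exact step3 39 1 3 18 19 36 ih (by decide) (by norm_num)
  · exact step3 42 1 7 16 27 37 ih (by decide) (by norm_num)
  · exact step3 45 1 11 14 25 42 ih (by decide) (by norm_num)
  · exact step3 48 1 4 1 36 40 ih (by decide) (by norm_num)
  · exact step3 51 1 12 1 38 43 ih (by decide) (by norm_num)
  · exact step3 54 1 8 9 36 48 ih (by decide) (by norm_num)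
  · exact step3 57 1 5 10 39 50 ih (by decide) (by norm_num)

lemma CubeRel.classify {f : ℕ → ℂ} (hf : CubeRel f) :
    ∃ A B C D : ℂ, ∀ n : ℕ, 0 < n → f n = A * n ^ 3 + B + C * chi n + D * psi n := by
  -- The coefficients interpolate `f` at `1, 2, 3, 4`.
  obtain ⟨A, hA⟩ : ∃ A : ℂ, A = (f 4 - f 1) / 63 := ⟨_, rfl⟩
  obtain ⟨C, hC⟩ : ∃ C : ℂ, C = (7 * A - f 2 + f 1) / 2 := ⟨_, rfl⟩
  obtain ⟨B, hB⟩ : ∃ B : ℂ, B = ((f 1 + f 2 - 9 * A) / 2 + f 3 - 27 * A) / 2 := ⟨_, rfl⟩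
  obtain ⟨D, hD⟩ : ∃ D : ℂ, D = ((f 1 + f 2 - 9 * A) / 2 - f 3 + 27 * A) / 2 := ⟨_, rfl⟩
  refine ⟨A, B, C, D, fun n hn => ?_⟩
  have key : CubeRel fun n => f n - (A * n ^ 3 + B + C * chi n + D * psi n) := by
    intro a b c d e r ha hb hc hd he hr h
    have e1 := hf a b c d e r ha hb hc hd he hr h
    have e2 := cubeRel_chi a b c d e r ha hb hc hd he hr h
    have e3 := cubeRel_psi a b c d e r ha hb hc hd he hr h
    have e4 : (a : ℂ) ^ 3 + b ^ 3 + c ^ 3 = d ^ 3 + e ^ 3 + r ^ 3 := by exact_mod_cast h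
    simp only at e2 e3 ⊢
    linear_combination e1 - C * e2 - D * e3 - A * e4
  have c1 : chi 1 = 1 := by decide
  have c2 : chi 2 = -1 := by decide
  have c3 : chi 3 = 0 := by decide
  have c4 : chi 4 = 1 := by decide
  have p1 : psi 1 = 1 := by decide
  have p2 : psi 2 = 1 := by decide
  have p3 : psi 3 = -1 := by decide
  have p4 : psi 4 = 1 := by decide
  have := key.eq_zero
    (by simp only [c1, p1, hD, hB, hC, hA]; push_cast; ring)
    (by simp only [c2, p2, hD, hB, hC, hA]; push_cast; ring)
    (by simp only [c3, p3, hD, hB, hC, hA]; push_cast; ring)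
    (by simp only [c4, p4, hD, hB, hC, hA]; push_cast; ring) n hn
  exact sub_eq_zero.mp this

/-! ### Determination of the cubes of the values -/

/-- The hypothesis on `g` for `k = j + 3`, specialised to tuples in which all but three of the
entries agree. -/
def Commutes (j : ℕ) (g : ℕ → ℂ) : Prop :=
  ∀ a b c m : ℕ, 0 < a → 0 < b → 0 < c → 0 < m →
    g (a ^ 3 + b ^ 3 + c ^ 3 + j * m ^ 3) = g a ^ 3 + g b ^ 3 + g c ^ 3 + j * g m ^ 3

lemma Commutes.of_forall {j : ℕ} {g : ℕ → ℂ}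
    (hadd : ∀ a : Fin (j + 3) → ℕ, (∀ i, 0 < a i) →
      g (∑ i, (a i) ^ 3) = ∑ i, (g (a i)) ^ 3) : Commutes j g := by
  intro a b c m ha hb hc hm
  have := hadd (Fin.cons a (Fin.cons b (Fin.cons c fun _ => m))) (by
    intro i
    refine Fin.cases ?_ (fun i => ?_) i
    · simpa
    refine Fin.cases ?_ (fun i => ?_) i
    · simpa
    refine Fin.cases ?_ (fun i => ?_) i
    · simpa
    · simpa)
  simpa [Fin.sum_univ_succ, add_assoc] using this

lemma Commutes.cubeRel {j : ℕ} {g : ℕ → ℂ} (hg : Commutes j g) : CubeRel fun n => g n ^ 3 := by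
  intro a b c d e r ha hb hc hd he hr h
  have h1 := hg a b c 1 ha hb hc one_pos
  have h2 := hg d e r 1 hd he hr one_pos
  rw [h, h2] at h1
  simp only
  linear_combination -h1

lemma cubic_vanish (p q r s : ℂ) (u : ℕ → ℕ) (hu : StrictMono u)
    (h : ∀ x, p * (u x : ℂ) ^ 3 + q * (u x : ℂ) ^ 2 + r * u x + s = 0) :
    p = 0 ∧ q = 0 ∧ r = 0 ∧ s = 0 := by
  have hP : (⟨p, q, r, s⟩ : Cubic ℂ).toPoly = 0 := by
    apply Polynomial.eq_zero_of_infinite_isRoot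
    refine Set.Infinite.mono (s := Set.range fun x => (u x : ℂ)) ?_ ?_
    · rintro _ ⟨x, rfl⟩
      simp only [Set.mem_ofPred_eq, Polynomial.IsRoot.def, Cubic.toPoly]
      simpa using h x
    · exact Set.infinite_range_of_injective (Nat.cast_injective.comp hu.injective)
  have h0 := (Cubic.toPoly_eq_zero_iff _).mp hP
  rw [Cubic.ext_iff] at h0
  exact h0

lemma chi_congr {m n : ℕ} (h : m % 3 = n % 3) : chi m = chi n := by unfold chi; rw [h]
lemma psi_congr {m n : ℕ} (h : m % 7 = n % 7) : psi m = psi n := by unfold psi; rw [h]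

/-- Comparison of the two expressions for `g S ^ 3`, along sums
`S = a³ + b³ + (c + 21 x)³ + j 21³` with `x` varying. -/
lemma Commutes.coeffs {j : ℕ} {g : ℕ → ℂ} (hg : Commutes j g) {A B C D : ℂ}
    (hf : ∀ n : ℕ, 0 < n → g n ^ 3 = A * n ^ 3 + B + C * chi n + D * psi n)
    (a b c : ℕ) (ha : 0 < a) (hb : 0 < b) (hc : 0 < c) (E : ℂ)
    (hE : E = (j + 3) * B + C * (chi a + chi b + chi c) + D * (psi a + psi b + psi c)) :
    A ^ 3 = A ∧ A ^ 2 * E = 0 ∧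
      E ^ 3 = B + C * chi (a ^ 3 + b ^ 3 + c ^ 3) + D * psi (a ^ 3 + b ^ 3 + c ^ 3) := by
  obtain ⟨u, hu⟩ : ∃ u : ℕ → ℕ,
      u = fun x => a ^ 3 + b ^ 3 + (c + 21 * x) ^ 3 + j * 21 ^ 3 := ⟨_, rfl⟩
  have hmono : StrictMono u := by
    intro x y hxy
    simp only [hu]
    gcongr
  have hmod : ∀ x, ∃ q, u x = a ^ 3 + b ^ 3 + c ^ 3 + 21 * q := fun x =>
    ⟨3 * c ^ 2 * x + 63 * c * x ^ 2 + 441 * x ^ 3 + j * 21 ^ 2, by simp only [hu]; ring⟩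
  have h21 : chi 21 = 0 ∧ psi 21 = 0 := by decide
  have := cubic_vanish (A ^ 3 - A) (3 * A ^ 2 * E) (3 * A * E ^ 2)
    (E ^ 3 - (B + C * chi (a ^ 3 + b ^ 3 + c ^ 3) + D * psi (a ^ 3 + b ^ 3 + c ^ 3))) u hmono (by
      intro x
      have hgu : g (u x) = A * u x + E := by
        have h1 := hg a b (c + 21 * x) 21 ha hb (by omega) (by norm_num)
        rw [hf a ha, hf b hb, hf (c + 21 * x) (by omega), hf 21 (by norm_num), h21.1, h21.2,
          chi_congr (show (c + 21 * x) % 3 = c % 3 by omega),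
          psi_congr (show (c + 21 * x) % 7 = c % 7 by omega)] at h1
        rw [hE]
        simp only [hu]
        rw [h1]
        push_cast
        ring
      have hpos : 0 < u x := by simp only [hu]; positivity
      have h2 := hf (u x) hpos
      obtain ⟨q, hq⟩ := hmod x
      rw [hgu, chi_congr (show u x % 3 = (a ^ 3 + b ^ 3 + c ^ 3) % 3 by omega),
        psi_congr (show u x % 7 = (a ^ 3 + b ^ 3 + c ^ 3) % 7 by omega)] at h2
      linear_combination h2)
  obtain ⟨h1, h2, -, h4⟩ := this
  refine ⟨sub_eq_zero.mp h1, ?_, sub_eq_zero.mp h4⟩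
  linear_combination h2 / 3

lemma Commutes.cube_eq {j : ℕ} {g : ℕ → ℂ} (hg : Commutes j g) (hg1 : g 1 = 1) (n : ℕ)
    (hn : 0 < n) : g n ^ 3 = n ^ 3 := by
  obtain ⟨A, B, C, D, hf⟩ := hg.cubeRel.classify
  -- Residues with `(∑ χ, ∑ ψ)` equal to `(0, 0)`, `(3, 0)`, `(-3, 0)`, `(0, 1)`, `(0, 2)`,
  -- `(0, -3)`.
  obtain ⟨hA, hAE, t1⟩ := hg.coeffs hf 21 21 21 (by norm_num) (by norm_num) (by norm_num) _ rfl
  obtain ⟨-, -, t2⟩ := hg.coeffs hf 7 7 7 (by norm_num) (by norm_num) (by norm_num) _ rfl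
  obtain ⟨-, -, t3⟩ := hg.coeffs hf 14 14 14 (by norm_num) (by norm_num) (by norm_num) _ rfl
  obtain ⟨-, -, t4⟩ := hg.coeffs hf 15 21 21 (by norm_num) (by norm_num) (by norm_num) _ rfl
  obtain ⟨-, -, t5⟩ := hg.coeffs hf 15 15 21 (by norm_num) (by norm_num) (by norm_num) _ rfl
  obtain ⟨-, -, t6⟩ := hg.coeffs hf 6 6 6 (by norm_num) (by norm_num) (by norm_num) _ rfl
  have h1 := hf 1 one_pos
  norm_num [chi, psi, hg1] at h1 hAE t1 t2 t3 t4 t5 t6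
  obtain ⟨w, hw⟩ : ∃ w : ℂ, w = (j + 3) * B := ⟨_, rfl⟩
  have hj : (j : ℂ) + 3 ≠ 0 := by exact_mod_cast (by omega : j + 3 ≠ 0)
  simp only [← hw] at t1 t2 t3 t4 t5 t6
  have hC : C = 0 := by
    by_contra hC
    have e1 : C * (w ^ 2 + 3 * C ^ 2) = 0 := by linear_combination (t2 - t3) / 18
    have e2 : w ^ 2 + 3 * C ^ 2 = 0 := by simpa [hC] using e1
    have e3 : C ^ 2 * w = 0 := by linear_combination (t2 - t1) / 27 - C * e2 / 3
    have e4 : w = 0 := by simpa [hC] using e3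
    rw [e4] at e2
    simp [hC] at e2
  subst hC
  have hD : D = 0 := by
    by_contra hD
    have e1 : D * (3 * w ^ 2 + 9 * w * D + 7 * D ^ 2) = 0 := by linear_combination t5 - t4
    have e2 : 3 * w ^ 2 + 9 * w * D + 7 * D ^ 2 = 0 := by simpa [hD] using e1
    have e3 : D * (3 * w ^ 2 - 6 * w * D + 7 * D ^ 2) = 0 := by
      linear_combination (t4 - t6) / 4
    have e4 : 3 * w ^ 2 - 6 * w * D + 7 * D ^ 2 = 0 := by simpa [hD] using e3
    have e5 : D * w = 0 := by linear_combination (e2 - e4) / 15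
    have e6 : w = 0 := by simpa [hD] using e5
    rw [e6] at e2
    simp [hD] at e2
  subst hD
  have hAB : A = 0 ∨ B = 0 := by
    rcases hAE with h | h | h
    · exact Or.inl h
    · exact absurd h hj
    · exact Or.inr h
  have hB : B = 0 := by
    rcases hAB with rfl | h
    · exfalso
      have hB1 : B = 1 := by linear_combination -h1
      rw [hw, hB1] at t1
      have : ((j + 3) ^ 3 : ℕ) = 1 := by
        have t1' : ((j : ℂ) + 3) ^ 3 = 1 := by linear_combination t1
        exact_mod_cast t1'
      nlinarith [pow_le_pow_left₀ (by norm_num : 0 ≤ 3) (by omega : 3 ≤ j + 3) 3]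
    · exact h
  subst hB
  have hA1 : A = 1 := by linear_combination -h1
  rw [hf n hn, hA1]
  ring

/-- `g` fixes sums of `j + 3` positive cubes (all but three of them equal). -/
lemma Commutes.fix {j : ℕ} {g : ℕ → ℂ} (hg : Commutes j g) (hg1 : g 1 = 1) (a b c m : ℕ)
    (ha : 0 < a) (hb : 0 < b) (hc : 0 < c) (hm : 0 < m) :
    g (a ^ 3 + b ^ 3 + c ^ 3 + j * m ^ 3) = (a ^ 3 + b ^ 3 + c ^ 3 + j * m ^ 3 : ℕ) := by
  rw [hg a b c m ha hb hc hm, hg.cube_eq hg1 a ha, hg.cube_eq hg1 b hb, hg.cube_eq hg1 c hc,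
    hg.cube_eq hg1 m hm]
  push_cast
  ring

/-! ### From sums of cubes to all integers -/

/-- A rational cube `(n t / c)³`, with `c` prime to `n`, within `12` below `R`. -/
lemma exists_approx (n R : ℕ) (hn : 0 < n) (hR : 0 < R) :
    ∃ t, 0 < t ∧ (n * t) ^ 3 ≤ (n * R ^ 2 + 1) ^ 3 * R ∧
      (n * R ^ 2 + 1) ^ 3 * R < (n * t) ^ 3 + 12 * (n * R ^ 2 + 1) ^ 3 := by
  obtain ⟨c, hc⟩ : ∃ c, c = n * R ^ 2 + 1 := ⟨_, rfl⟩
  rw [← hc]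
  have hnc : n ≤ c := by
    rw [hc]
    have : 0 < R ^ 2 := by positivity
    nlinarith
  have hex : ∃ t, c ^ 3 * R < (n * t) ^ 3 := by
    refine ⟨c * R + 1, ?_⟩
    calc c ^ 3 * R ≤ c ^ 3 * R ^ 3 := by
          gcongr
          exact Nat.le_self_pow (by norm_num) R
      _ = (c * R) ^ 3 := by ring
      _ < (n * (c * R + 1)) ^ 3 := by
          refine Nat.pow_lt_pow_left ?_ (by norm_num)
          calc c * R < c * R + 1 := Nat.lt_succ_self _
            _ ≤ n * (c * R + 1) := Nat.le_mul_of_pos_left _ hn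
  classical
  have hs := Nat.find_spec hex
  have hmin := fun m => Nat.find_min hex (m := m)
  generalize Nat.find hex = T at hs hmin
  have hT : 2 ≤ T := by
    by_contra hT
    have : (n * T) ^ 3 ≤ c ^ 3 * R := by
      calc (n * T) ^ 3 ≤ (c * 1) ^ 3 := by
            gcongr
            omega
        _ = c ^ 3 * 1 := by ring
        _ ≤ c ^ 3 * R := by gcongr; exact hR
    omega
  obtain ⟨t, rfl⟩ : ∃ t, T = t + 1 := ⟨T - 1, by omega⟩
  have ht := not_lt.mp (hmin t (by omega))
  refine ⟨t, by omega, ht, ?_⟩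
  have ht1 : 1 ≤ t := by omega
  have hb : n * t ≤ c * R := by
    have : (n * t) ^ 3 ≤ (c * R) ^ 3 := by
      calc (n * t) ^ 3 ≤ c ^ 3 * R := ht
        _ ≤ c ^ 3 * R ^ 3 := by
          gcongr
          exact Nat.le_self_pow (by norm_num) R
        _ = (c * R) ^ 3 := by ring
    exact (Nat.pow_le_pow_iff_left (by norm_num)).mp this
  have hgap : (n * (t + 1)) ^ 3 ≤ (n * t) ^ 3 + 7 * n * (n * t) ^ 2 := by
    have : 3 * t ^ 2 + 3 * t + 1 ≤ 7 * t ^ 2 := by nlinarith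
    calc (n * (t + 1)) ^ 3 = (n * t) ^ 3 + n ^ 3 * (3 * t ^ 2 + 3 * t + 1) := by ring
      _ ≤ (n * t) ^ 3 + n ^ 3 * (7 * t ^ 2) := by gcongr
      _ = _ := by ring
  have hlast : 7 * n * (n * t) ^ 2 ≤ 12 * c ^ 3 := by
    calc 7 * n * (n * t) ^ 2 ≤ 7 * n * (c * R) ^ 2 := by gcongr
      _ = 7 * c ^ 2 * (n * R ^ 2) := by ring
      _ ≤ 7 * c ^ 2 * c := by
          gcongr
          omega
      _ = 7 * c ^ 3 := by ring
      _ ≤ 12 * c ^ 3 := by gcongr; norm_num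
  omega

/-- If `n > 1` is coprime to `6`, some `M` coprime to `n` and its multiple `n M` are both sums of
`j + 3` positive cubes. With rational `β = α - 1 ∈ (-1, 0]` and `z`, and up to a common factor,
the cubes in `M` are those of `1 + β`, `1 - β`, `z` and `j` times `n`; the cubes in `n M` are those
of `n + α`, `n - α` and `j + 1` times `n²`. The equation between the two sums is linear in `β` and
reads `12 β = z³ - R`, so it suffices to choose `z` with `z³` close to `R`. Choosing `z` divisible
by `n` makes `12 α ≡ 8` modulo `n`, which gives the coprimality. -/
lemma exists_multiple (j n : ℕ) (hn : 1 < n) (h6 : Nat.Coprime n 6) :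
    ∃ x₁ x₂ x₃ x₄ y₁ y₂ y₃ y₄ : ℕ, (0 < x₁ ∧ 0 < x₂ ∧ 0 < x₃ ∧ 0 < x₄) ∧
      (0 < y₁ ∧ 0 < y₂ ∧ 0 < y₃ ∧ 0 < y₄) ∧
      Nat.Coprime n (x₁ ^ 3 + x₂ ^ 3 + x₃ ^ 3 + j * x₄ ^ 3) ∧
      n * (x₁ ^ 3 + x₂ ^ 3 + x₃ ^ 3 + j * x₄ ^ 3) = y₁ ^ 3 + y₂ ^ 3 + y₃ ^ 3 + j * y₄ ^ 3 := by
  obtain ⟨R, hR⟩ : ∃ R, R + j * n ^ 3 = 2 * n ^ 2 + (j + 1) * n ^ 5 + 4 := by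
    have : n ^ 3 ≤ n ^ 5 := Nat.pow_le_pow_right (by omega) (by norm_num)
    have h2 : j * n ^ 3 ≤ j * n ^ 5 := by gcongr
    exact ⟨2 * n ^ 2 + (j + 1) * n ^ 5 + 4 - j * n ^ 3, by rw [add_mul]; omega⟩
  have hRpos : 0 < R := by
    have : n ^ 3 ≤ n ^ 5 := Nat.pow_le_pow_right (by omega) (by norm_num)
    have h2 : j * n ^ 3 ≤ j * n ^ 5 := by gcongr
    rw [add_mul] at hR
    omega
  obtain ⟨t, ht, hlo, hhi⟩ := exists_approx n R (by omega) hRpos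
  obtain ⟨c, hc⟩ : ∃ c, c = n * R ^ 2 + 1 := ⟨_, rfl⟩
  rw [← hc] at hlo hhi
  have hcpos : 0 < c := by omega
  obtain ⟨u, hu⟩ : ∃ u, u = 12 * c ^ 3 := ⟨_, rfl⟩
  have hupos : 0 < u := by rw [hu]; positivity
  -- `s = -u β` and `v = u α`
  obtain ⟨s, hs⟩ : ∃ s, (n * t) ^ 3 + s = c ^ 3 * R := ⟨c ^ 3 * R - (n * t) ^ 3, by omega⟩
  obtain ⟨v, hv⟩ : ∃ v, v + s = u := ⟨u - s, by omega⟩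
  have hvpos : 0 < v := by omega
  obtain ⟨y, hy⟩ : ∃ y, y + v = n * u := by
    have : u ≤ n * u := Nat.le_mul_of_pos_left _ (by omega)
    exact ⟨n * u - v, by omega⟩
  have hypos : 0 < y := by nlinarith
  have hRz : (R : ℤ) + j * n ^ 3 = 2 * n ^ 2 + (j + 1) * n ^ 5 + 4 := by exact_mod_cast hR
  have huz : (u : ℤ) = 12 * c ^ 3 := by exact_mod_cast hu
  have hsz : (s : ℤ) = c ^ 3 * R - (n * t) ^ 3 := by
    rw [eq_sub_iff_add_eq']; exact_mod_cast hs
  have hvz : (v : ℤ) = u - s := by rw [eq_sub_iff_add_eq]; exact_mod_cast hv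
  have hyz : (y : ℤ) = n * u - v := by rw [eq_sub_iff_add_eq]; exact_mod_cast hy
  have hRz' : (R : ℤ) = 2 * n ^ 2 + (j + 1) * n ^ 5 + 4 - j * n ^ 3 := by linarith
  have hM : (v : ℤ) ^ 3 + (u + s) ^ 3 + (12 * c ^ 2 * (n * t)) ^ 3 + j * (n * u) ^ 3 =
      2 * n ^ 2 * u ^ 3 + 6 * u * v ^ 2 + (j + 1) * n ^ 5 * u ^ 3 := by
    rw [hvz, hsz, huz, hRz']
    ring
  refine ⟨v, u + s, 12 * c ^ 2 * (n * t), n * u, n * u + v, y, n ^ 2 * u, n ^ 2 * u,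
    ⟨hvpos, by omega, by positivity, by positivity⟩,
    ⟨by positivity, hypos, by positivity, by positivity⟩, ?_, ?_⟩
  · rw [← Nat.isCoprime_iff_coprime]
    push_cast
    rw [hM]
    have h6z : IsCoprime (n : ℤ) 6 := by exact_mod_cast Nat.isCoprime_iff_coprime.mpr h6
    have h2z : IsCoprime (n : ℤ) 2 := h6z.of_isCoprime_of_dvd_right (by norm_num)
    have h12z : IsCoprime (n : ℤ) 12 := by
      have := h6z.mul_right h2z
      norm_num at this
      exact this
    have h8z : IsCoprime (n : ℤ) 8 := by
      have := h2z.pow_right (n := 3)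
      norm_num at this
      exact this
    have hcz : IsCoprime (n : ℤ) c := ⟨-(R : ℤ) ^ 2, 1, by rw [hc]; push_cast; ring⟩
    have huc : IsCoprime (n : ℤ) u := by
      rw [huz]
      exact h12z.mul_right hcz.pow_right
    have hvc : IsCoprime (n : ℤ) v := by
      have : (v : ℤ) = 8 * c ^ 3 +
          n * (n ^ 2 * t ^ 3 - c ^ 3 * (2 * n + (j + 1) * n ^ 4 - j * n ^ 2)) := by
        rw [hvz, hsz, huz, hRz']
        ring
      rw [this]
      exact (h8z.mul_right hcz.pow_right).add_mul_left_right _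
    have : (2 * n ^ 2 * u ^ 3 + 6 * u * v ^ 2 + (j + 1) * n ^ 5 * u ^ 3 : ℤ) =
        6 * u * v ^ 2 + n * (2 * n * u ^ 3 + (j + 1) * n ^ 4 * u ^ 3) := by ring
    rw [this]
    exact ((h6z.mul_right huc).mul_right hvc.pow_right).add_mul_left_right _
  · zify
    rw [hM, hyz]
    ring

/-- Conclusion for a number `n` with a suitable multiple `n * M`. -/
lemma eq_of_mul {g : ℕ → ℂ}
    (hmul : ∀ m n : ℕ, 0 < m → 0 < n → Nat.Coprime m n → g (m * n) = g m * g n)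
    {n M : ℕ} (hn : 0 < n) (hM : 0 < M) (hco : Nat.Coprime n M) (h1 : g M = M)
    (h2 : g (n * M) = (n * M : ℕ)) : g n = n := by
  rw [hmul n M hn hM hco, h1] at h2
  have : (M : ℂ) ≠ 0 := by exact_mod_cast hM.ne'
  push_cast at h2
  exact mul_right_cancel₀ this h2

lemma eq_of_coprime_six {j : ℕ} {g : ℕ → ℂ} (hg : Commutes j g) (hg1 : g 1 = 1)
    (hmul : ∀ m n : ℕ, 0 < m → 0 < n → Nat.Coprime m n → g (m * n) = g m * g n)
    (n : ℕ) (hn : 0 < n) (h6 : Nat.Coprime n 6) : g n = n := by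
  by_cases h1 : n = 1
  · simp [h1, hg1]
  obtain ⟨x₁, x₂, x₃, x₄, y₁, y₂, y₃, y₄, ⟨a1, a2, a3, a4⟩, ⟨b1, b2, b3, b4⟩, hco, heq⟩ :=
    exists_multiple j n (by omega) h6
  refine eq_of_mul hmul hn (by positivity) hco (hg.fix hg1 _ _ _ _ a1 a2 a3 a4) ?_
  rw [heq]
  exact hg.fix hg1 _ _ _ _ b1 b2 b3 b4

/-- The exponent `e` is reduced modulo `3` by scaling the summands with a power of `2`. -/
lemma eq_two_pow {j : ℕ} {g : ℕ → ℂ} (hg : Commutes j g) (hg1 : g 1 = 1)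
    (hmul : ∀ m n : ℕ, 0 < m → 0 < n → Nat.Coprime m n → g (m * n) = g m * g n)
    (e : ℕ) : g (2 ^ e) = (2 ^ e : ℕ) := by
  have main : ∀ i r o a b c m : ℕ, 0 < a → 0 < b → 0 < c → 0 < m → Nat.Coprime o 6 → 0 < o →
      a ^ 3 + b ^ 3 + c ^ 3 + j * m ^ 3 = 2 ^ r * o →
      g (2 ^ (3 * i + r)) = (2 ^ (3 * i + r) : ℕ) := by
    intro i r o a b c m ha hb hc hm ho ho0 heq
    refine eq_of_mul hmul (by positivity) ho0 ?_ (eq_of_coprime_six hg hg1 hmul o ho0 ho) ?_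
    · exact Nat.Coprime.pow_left _ (Nat.Coprime.coprime_dvd_right (by norm_num) ho).symm
    · have h := hg.fix hg1 (2 ^ i * a) (2 ^ i * b) (2 ^ i * c) (2 ^ i * m) (by positivity)
        (by positivity) (by positivity) (by positivity)
      have he : (2 ^ i * a) ^ 3 + (2 ^ i * b) ^ 3 + (2 ^ i * c) ^ 3 + j * (2 ^ i * m) ^ 3 =
          2 ^ (3 * i + r) * o := by
        rw [pow_add, mul_assoc, ← heq]
        ring
      rwa [he] at h
  have hco : ∀ o : ℕ, o % 2 = 1 → o % 3 ≠ 0 → Nat.Coprime o 6 := by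
    intro o h2 h3
    have c2 : Nat.Coprime o 2 := (Nat.coprime_two_right).mpr (Nat.odd_iff.mpr h2)
    have c3 : Nat.Coprime o 3 :=
      ((Nat.Prime.coprime_iff_not_dvd Nat.prime_three).mpr (by omega)).symm
    exact Nat.Coprime.mul_right c2 c3
  obtain ⟨i, hi⟩ : ∃ i, e = 3 * i + 0 ∨ e = 3 * i + 1 ∨ e = 3 * i + 2 := ⟨e / 3, by omega⟩
  rcases hi with rfl | rfl | rfl
  · exact main i 0 (1 + 216 * (2 + j)) 1 6 6 6 one_pos (by norm_num) (by norm_num) (by norm_num)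
      (hco _ (by omega) (by omega)) (by omega) (by ring)
  · exact main i 1 (1 + 108 * (1 + j)) 1 1 6 6 one_pos one_pos (by norm_num) (by norm_num)
      (hco _ (by omega) (by omega)) (by omega) (by ring)
  · exact main i 2 (7 + 54 * (1 + j)) 1 3 6 6 one_pos (by norm_num) (by norm_num) (by norm_num)
      (hco _ (by omega) (by omega)) (by omega) (by ring)

lemma eq_of_coprime_three {j : ℕ} {g : ℕ → ℂ} (hg : Commutes j g) (hg1 : g 1 = 1)
    (hmul : ∀ m n : ℕ, 0 < m → 0 < n → Nat.Coprime m n → g (m * n) = g m * g n)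
    (n : ℕ) (hn : 0 < n) (h3 : Nat.Coprime n 3) : g n = n := by
  obtain ⟨e, m, hm, rfl⟩ := Nat.exists_eq_pow_mul_and_not_dvd hn.ne' 2 (by norm_num)
  have hm0 : 0 < m := Nat.pos_of_ne_zero (by rintro rfl; simp at hm)
  have hc2 : Nat.Coprime 2 m := (Nat.Prime.coprime_iff_not_dvd Nat.prime_two).mpr hm
  have hc3 : Nat.Coprime m 3 := Nat.Coprime.coprime_dvd_left (Dvd.intro_left _ rfl) h3
  rw [hmul _ _ (by positivity) hm0 (hc2.pow_left e), eq_two_pow hg hg1 hmul,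
    eq_of_coprime_six hg hg1 hmul m hm0 (Nat.Coprime.mul_right hc2.symm hc3)]
  push_cast
  ring

lemma eq_three_pow {j : ℕ} {g : ℕ → ℂ} (hg : Commutes j g) (hg1 : g 1 = 1)
    (hmul : ∀ m n : ℕ, 0 < m → 0 < n → Nat.Coprime m n → g (m * n) = g m * g n)
    (e : ℕ) : g (3 ^ e) = (3 ^ e : ℕ) := by
  have main : ∀ i r o a b c m : ℕ, 0 < a → 0 < b → 0 < c → 0 < m → o % 3 ≠ 0 →
      a ^ 3 + b ^ 3 + c ^ 3 + j * m ^ 3 = 3 ^ r * o →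
      g (3 ^ (3 * i + r)) = (3 ^ (3 * i + r) : ℕ) := by
    intro i r o a b c m ha hb hc hm ho heq
    have ho0 : 0 < o := by omega
    have ho3 : Nat.Coprime 3 o := (Nat.Prime.coprime_iff_not_dvd Nat.prime_three).mpr (by omega)
    refine eq_of_mul hmul (by positivity) ho0 (ho3.pow_left _)
      (eq_of_coprime_three hg hg1 hmul o ho0 ho3.symm) ?_
    have h := hg.fix hg1 (3 ^ i * a) (3 ^ i * b) (3 ^ i * c) (3 ^ i * m) (by positivity)
      (by positivity) (by positivity) (by positivity)
    have he : (3 ^ i * a) ^ 3 + (3 ^ i * b) ^ 3 + (3 ^ i * c) ^ 3 + j * (3 ^ i * m) ^ 3 =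
        3 ^ (3 * i + r) * o := by
      rw [pow_add, mul_assoc, ← heq]
      ring
    rwa [he] at h
  obtain ⟨i, hi⟩ : ∃ i, e = 3 * i + 0 ∨ e = 3 * i + 1 ∨ e = 3 * i + 2 := ⟨e / 3, by omega⟩
  rcases hi with rfl | rfl | rfl
  · exact main i 0 (1 + 27 * (2 + j)) 1 3 3 3 one_pos (by norm_num) (by norm_num) (by norm_num)
      (by omega) (by ring)
  · exact main i 1 (1 + 9 * j) 1 1 1 3 one_pos one_pos one_pos (by norm_num)
      (by omega) (by ring)
  · exact main i 2 (1 + 3 * (1 + j)) 1 2 3 3 one_pos (by norm_num) (by norm_num) (by norm_num)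
      (by omega) (by ring)

end CubesCommute

open CubesCommute in
theorem cubes_commute_k (k : ℕ) (hk : 3 ≤ k) (g : ℕ → ℂ)
    (hg1 : g 1 = 1)
    (hmul : ∀ m n : ℕ, 0 < m → 0 < n → Nat.Coprime m n → g (m * n) = g m * g n)
    (hadd : ∀ a : Fin k → ℕ, (∀ i, 0 < a i) →
      g (∑ i, (a i) ^ 3) = ∑ i, (g (a i)) ^ 3) :
    ∀ n : ℕ, 0 < n → g n = n := by
  obtain ⟨j, rfl⟩ : ∃ j, k = j + 3 := ⟨k - 3, by omega⟩
  have hg : Commutes j g := Commutes.of_forall hadd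
  intro n hn
  obtain ⟨e, m, hm, rfl⟩ := Nat.exists_eq_pow_mul_and_not_dvd hn.ne' 3 (by norm_num)
  have hm0 : 0 < m := Nat.pos_of_ne_zero (by rintro rfl; simp at hm)
  have hc3 : Nat.Coprime 3 m := (Nat.Prime.coprime_iff_not_dvd Nat.prime_three).mpr hm
  rw [hmul _ _ (by positivity) hm0 (hc3.pow_left e), eq_three_pow hg hg1 hmul,
    eq_of_coprime_three hg hg1 hmul m hm0 hc3.symm]
  push_cast
  ring
end

section
/- If g : ℕ → ℂ is a multiplicative function satisfying g(a³ + b³ + c³) = g(a)³ + g(b)³ + g(c)³ for all positive integers a, b, c, then g(n)³ = n³ for every positive integer n. -/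
/-!
Put `h n = g n ^ 3`. Two representations of one integer as a sum of three positive cubes give a
linear relation between values of `h`, and `e n = h n - n ^ 3` satisfies the same relation. The
claim is `e = 0`.

*Small arguments.* Since `g 3 = g (1 + 1 + 1) = 3`, multiplicativity gives `e (3 * k) = 27 * e k`
for `k` prime to `3`. Combined with a few coincidences among sums of three cubes of integers up to
`15`, this makes `e 4, e 5, e 9, e 10, e 11` explicit multiples of `e 2`, and
`9³ + 11³ + 11³ = 2³ + 2³ + 15³` then forces `104 * e 2 = 0`. So `e` vanishes up to `15`
(`small_values`).

*Descent.* With `N = 19 t + 3 + 3 k` there is the identity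
`N³ + (t + 2 + 2 k)³ + (11 t)³ = (11 t + 3 + 3 k)³ + (19 t + 2 + 2 k)³ + t³`,
in which `N` is the largest argument. Taking `t = 1, 2, 3` reaches every residue class of `N`
modulo `3`, starting at `22`, `41`, `60` respectively. The finitely many remaining arguments come
from `h (3 * k) = 27 * h k` or from one numerical coincidence each.
-/

section

variable {g : ℕ → ℂ}

theorem cube_rel
    (hadd : ∀ a b c : ℕ, 0 < a → 0 < b → 0 < c →
      g (a ^ 3 + b ^ 3 + c ^ 3) = g a ^ 3 + g b ^ 3 + g c ^ 3)
    (a b c x y z : ℕ) (ha : 0 < a) (hb : 0 < b) (hc : 0 < c) (hx : 0 < x) (hy : 0 < y)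
    (hz : 0 < z) (h : a ^ 3 + b ^ 3 + c ^ 3 = x ^ 3 + y ^ 3 + z ^ 3) :
    g a ^ 3 + g b ^ 3 + g c ^ 3 = g x ^ 3 + g y ^ 3 + g z ^ 3 := by
  rw [← hadd a b c ha hb hc, ← hadd x y z hx hy hz, h]

/-- A relation between sums of three cubes transfers the claim to `a` from the other five
arguments. -/
theorem cube_step
    (hadd : ∀ a b c : ℕ, 0 < a → 0 < b → 0 < c →
      g (a ^ 3 + b ^ 3 + c ^ 3) = g a ^ 3 + g b ^ 3 + g c ^ 3)
    (a b c x y z : ℕ) (ha : 0 < a) (hb : 0 < b) (hc : 0 < c) (hx : 0 < x) (hy : 0 < y)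
    (hz : 0 < z) (h : a ^ 3 + b ^ 3 + c ^ 3 = x ^ 3 + y ^ 3 + z ^ 3)
    (pb : g b ^ 3 = (b : ℂ) ^ 3) (pc : g c ^ 3 = (c : ℂ) ^ 3) (px : g x ^ 3 = (x : ℂ) ^ 3)
    (py : g y ^ 3 = (y : ℂ) ^ 3) (pz : g z ^ 3 = (z : ℂ) ^ 3) :
    g a ^ 3 = (a : ℂ) ^ 3 := by
  have h1 := cube_rel hadd a b c x y z ha hb hc hx hy hz h
  have h2 : (a : ℂ) ^ 3 + (b : ℂ) ^ 3 + (c : ℂ) ^ 3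
      = (x : ℂ) ^ 3 + (y : ℂ) ^ 3 + (z : ℂ) ^ 3 := by exact_mod_cast h
  linear_combination h1 - h2 - pb - pc + px + py + pz

theorem g_three (hg1 : g 1 = 1)
    (hadd : ∀ a b c : ℕ, 0 < a → 0 < b → 0 < c →
      g (a ^ 3 + b ^ 3 + c ^ 3) = g a ^ 3 + g b ^ 3 + g c ^ 3) : g 3 = 3 := by
  have h := hadd 1 1 1 one_pos one_pos one_pos
  norm_num [hg1] at h
  exact h

theorem cube_three_mul (hg1 : g 1 = 1)
    (hmul : ∀ m n : ℕ, 0 < m → 0 < n → Nat.Coprime m n → g (m * n) = g m * g n)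
    (hadd : ∀ a b c : ℕ, 0 < a → 0 < b → 0 < c →
      g (a ^ 3 + b ^ 3 + c ^ 3) = g a ^ 3 + g b ^ 3 + g c ^ 3)
    (k : ℕ) (hk : ¬ 3 ∣ k) : g (3 * k) ^ 3 = 27 * g k ^ 3 := by
  have hpos : 0 < k := Nat.pos_of_ne_zero fun h => hk (h ▸ dvd_zero 3)
  rw [hmul 3 k (by norm_num) hpos ((Nat.Prime.coprime_iff_not_dvd Nat.prime_three).2 hk),
    g_three hg1 hadd]
  ring

theorem small_values (hg1 : g 1 = 1)
    (hmul : ∀ m n : ℕ, 0 < m → 0 < n → Nat.Coprime m n → g (m * n) = g m * g n)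
    (hadd : ∀ a b c : ℕ, 0 < a → 0 < b → 0 < c →
      g (a ^ 3 + b ^ 3 + c ^ 3) = g a ^ 3 + g b ^ 3 + g c ^ 3) :
    ∀ n : ℕ, 0 < n → n ≤ 15 → g n ^ 3 = (n : ℂ) ^ 3 := by
  have R := cube_rel hadd
  have T := cube_three_mul hg1 hmul hadd
  have e1 : g 1 ^ 3 = 1 := by rw [hg1]; norm_num
  have e3 : g 3 ^ 3 = 27 := by rw [g_three hg1 hadd]; norm_num
  have t6 : g 6 ^ 3 = 27 * g 2 ^ 3 := T 2 (by norm_num)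
  have t12 : g 12 ^ 3 = 27 * g 4 ^ 3 := T 4 (by norm_num)
  have t15 : g 15 ^ 3 = 27 * g 5 ^ 3 := T 5 (by norm_num)
  have r1 := R 2 3 6 1 5 5 (by norm_num) (by norm_num) (by norm_num) (by norm_num) (by norm_num)
    (by norm_num) (by norm_num)
  have r2 := R 1 9 10 1 1 12 (by norm_num) (by norm_num) (by norm_num) (by norm_num)
    (by norm_num) (by norm_num) (by norm_num)
  have r3 := R 4 6 9 1 2 10 (by norm_num) (by norm_num) (by norm_num) (by norm_num)
    (by norm_num) (by norm_num) (by norm_num)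
  have r4 := R 4 4 11 1 9 9 (by norm_num) (by norm_num) (by norm_num) (by norm_num)
    (by norm_num) (by norm_num) (by norm_num)
  have r5 := R 6 6 11 2 3 12 (by norm_num) (by norm_num) (by norm_num) (by norm_num)
    (by norm_num) (by norm_num) (by norm_num)
  have r6 := R 9 11 11 2 2 15 (by norm_num) (by norm_num) (by norm_num) (by norm_num)
    (by norm_num) (by norm_num) (by norm_num)
  -- With `e n = g n ^ 3 - n ^ 3`, the next facts read `e 5 = 14 e 2`, `e 10 = 14 e 4 + 13 e 2`,
  -- `e 9 = 13 e 4 - 13 e 2`, `e 11 = 24 e 4 - 26 e 2`, `e 4 = 9 e 2`.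
  have f5 : g 5 ^ 3 - 125 = 14 * (g 2 ^ 3 - 8) := by
    linear_combination (-1 / 2) * r1 + (1 / 2) * t6 + (1 / 2) * e3 - (1 / 2) * e1
  have f10 : g 10 ^ 3 - 1000 = 14 * (g 4 ^ 3 - 64) + 13 * (g 2 ^ 3 - 8) := by
    linear_combination (1 / 2) * r2 - (1 / 2) * r3 + (1 / 2) * t6 + (1 / 2) * t12
  have f9 : g 9 ^ 3 - 729 = 13 * (g 4 ^ 3 - 64) - 13 * (g 2 ^ 3 - 8) := by
    linear_combination r2 - f10 + t12 + e1
  have f11 : g 11 ^ 3 - 1331 = 24 * (g 4 ^ 3 - 64) - 26 * (g 2 ^ 3 - 8) := by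
    linear_combination r4 + 2 * f9 + e1
  have f4 : g 4 ^ 3 - 64 = 9 * (g 2 ^ 3 - 8) := by
    linear_combination (-1 / 3) * r5 + (1 / 3) * f11 + (2 / 3) * t6 - (1 / 3) * t12 - (1 / 3) * e3
  have e2 : g 2 ^ 3 = 8 := by
    linear_combination (1 / 104) * r6 - (1 / 104) * f9 - (2 / 104) * f11 - (61 / 104) * f4
      + (1 / 104) * t15 + (27 / 104) * f5
  have e4 : g 4 ^ 3 = 64 := by linear_combination f4 + 9 * e2
  have e5 : g 5 ^ 3 = 125 := by linear_combination f5 + 14 * e2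
  have e6 : g 6 ^ 3 = 216 := by linear_combination t6 + 27 * e2
  have e9 : g 9 ^ 3 = 729 := by linear_combination f9 + 13 * e4 - 13 * e2
  have e10 : g 10 ^ 3 = 1000 := by linear_combination f10 + 14 * e4 + 13 * e2
  have e11 : g 11 ^ 3 = 1331 := by linear_combination f11 + 24 * e4 - 26 * e2
  have e12 : g 12 ^ 3 = 1728 := by linear_combination t12 + 27 * e4
  have e15 : g 15 ^ 3 = 3375 := by linear_combination t15 + 27 * e5
  have r8 := R 4 5 11 2 8 10 (by norm_num) (by norm_num) (by norm_num) (by norm_num)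
    (by norm_num) (by norm_num) (by norm_num)
  have e8 : g 8 ^ 3 = 512 := by linear_combination -r8 + e4 + e5 + e11 - e2 - e10
  have r13 := R 3 8 13 2 10 12 (by norm_num) (by norm_num) (by norm_num) (by norm_num)
    (by norm_num) (by norm_num) (by norm_num)
  have e13 : g 13 ^ 3 = 2197 := by linear_combination r13 - e3 - e8 + e2 + e10 + e12
  have r7 := R 7 7 12 1 6 13 (by norm_num) (by norm_num) (by norm_num) (by norm_num)
    (by norm_num) (by norm_num) (by norm_num)
  have e7 : g 7 ^ 3 = 343 := by
    linear_combination (1 / 2) * (r7 - e12 + e1 + e6 + e13)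
  have r14 := R 7 8 14 2 6 15 (by norm_num) (by norm_num) (by norm_num) (by norm_num)
    (by norm_num) (by norm_num) (by norm_num)
  have e14 : g 14 ^ 3 = 2744 := by linear_combination r14 - e7 - e8 + e2 + e6 + e15
  intro n h0 hn
  interval_cases n <;> norm_num <;> assumption

theorem all_values (hg1 : g 1 = 1)
    (hmul : ∀ m n : ℕ, 0 < m → 0 < n → Nat.Coprime m n → g (m * n) = g m * g n)
    (hadd : ∀ a b c : ℕ, 0 < a → 0 < b → 0 < c →
      g (a ^ 3 + b ^ 3 + c ^ 3) = g a ^ 3 + g b ^ 3 + g c ^ 3) (n : ℕ) (hn : 0 < n) :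
    g n ^ 3 = (n : ℂ) ^ 3 := by
  induction n using Nat.strong_induction_on with
  | _ n ih =>
  -- The descent identity with `n` as its largest argument.
  have descent : ∀ t k : ℕ, 0 < t → n = 19 * t + 3 + 3 * k → g n ^ 3 = (n : ℂ) ^ 3 := by
    intro t k ht hnk
    exact cube_step hadd n (t + 2 + 2 * k) (11 * t) (11 * t + 3 + 3 * k) (19 * t + 2 + 2 * k) t
      hn (by omega) (by omega) (by omega) (by omega) ht (by rw [hnk]; ring)
      (ih _ (by omega) (by omega)) (ih _ (by omega) (by omega)) (ih _ (by omega) (by omega))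
      (ih _ (by omega) (by omega)) (ih _ (by omega) ht)
  -- One numerical coincidence with `n` as its largest argument.
  have sporadic : ∀ b c x y z : ℕ,
      (0 < b ∧ b < n) ∧ (0 < c ∧ c < n) ∧ (0 < x ∧ x < n) ∧ (0 < y ∧ y < n) ∧ (0 < z ∧ z < n) ∧
        n ^ 3 + b ^ 3 + c ^ 3 = x ^ 3 + y ^ 3 + z ^ 3 → g n ^ 3 = (n : ℂ) ^ 3 := by
    rintro b c x y z ⟨hb, hc, hx, hy, hz, h⟩
    exact cube_step hadd n b c x y z hn hb.1 hc.1 hx.1 hy.1 hz.1 h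
      (ih _ hb.2 hb.1) (ih _ hc.2 hc.1) (ih _ hx.2 hx.1) (ih _ hy.2 hy.1) (ih _ hz.2 hz.1)
  have triple : ∀ k : ℕ, n = 3 * k → ¬ 3 ∣ k → g n ^ 3 = (n : ℂ) ^ 3 := by
    intro k hnk hk
    rw [hnk, cube_three_mul hg1 hmul hadd k hk, ih k (by omega) (by omega)]
    push_cast
    ring
  by_cases h15 : n ≤ 15
  · exact small_values hg1 hmul hadd n hn h15
  by_cases c1 : n % 3 = 1 ∧ 22 ≤ n
  · exact descent 1 ((n - 22) / 3) one_pos (by omega)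
  by_cases c2 : n % 3 = 2 ∧ 41 ≤ n
  · exact descent 2 ((n - 41) / 3) two_pos (by omega)
  by_cases c3 : n % 3 = 0 ∧ 60 ≤ n
  · exact descent 3 ((n - 60) / 3) three_pos (by omega)
  by_cases c9 : n % 3 = 0 ∧ n % 9 ≠ 0
  · exact triple (n / 3) (by omega) (by omega)
  have hlist : n = 16 ∨ n = 17 ∨ n = 18 ∨ n = 19 ∨ n = 20 ∨ n = 23 ∨ n = 26 ∨ n = 27 ∨ n = 29 ∨
      n = 32 ∨ n = 35 ∨ n = 36 ∨ n = 38 ∨ n = 45 ∨ n = 54 := by omega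
  rcases hlist with h | h | h | h | h | h | h | h | h | h | h | h | h | h | h
  · exact sporadic 1 2 1 9 15 (by rw [h]; norm_num)
  · exact sporadic 1 2 6 11 15 (by rw [h]; norm_num)
  · exact sporadic 9 12 1 15 17 (by rw [h]; norm_num)
  · exact sporadic 8 15 1 17 18 (by rw [h]; norm_num)
  · exact sporadic 1 6 3 11 19 (by rw [h]; norm_num)
  · exact sporadic 1 2 8 18 18 (by rw [h]; norm_num)
  · exact sporadic 1 3 7 20 21 (by rw [h]; norm_num)
  · exact sporadic 1 4 3 16 25 (by rw [h]; norm_num)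
  · exact sporadic 1 2 4 23 23 (by rw [h]; norm_num)
  · exact sporadic 1 4 1 18 30 (by rw [h]; norm_num)
  · exact sporadic 1 3 15 26 28 (by rw [h]; norm_num)
  · exact sporadic 1 3 1 27 30 (by rw [h]; norm_num)
  · exact sporadic 1 1 5 16 37 (by rw [h]; norm_num)
  · exact sporadic 1 11 14 25 42 (by rw [h]; norm_num)
  · exact sporadic 1 8 9 36 48 (by rw [h]; norm_num)

end

theorem cubes_commute_three_cube (g : ℕ → ℂ)
    (hg1 : g 1 = 1)
    (hmul : ∀ m n : ℕ, 0 < m → 0 < n → Nat.Coprime m n → g (m * n) = g m * g n)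
    (hadd : ∀ a b c : ℕ, 0 < a → 0 < b → 0 < c →
      g (a ^ 3 + b ^ 3 + c ^ 3) = g a ^ 3 + g b ^ 3 + g c ^ 3) :
    ∀ n : ℕ, 0 < n → g n ^ 3 = ((n ^ 3 : ℕ) : ℂ) := by
  intro n hn
  rw [all_values hg1 hmul hadd n hn, Nat.cast_pow]
end
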